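/- arXiv:1404.7764 — 2 statements merged into one kernel-verified Lean document; each statement's English description precedes it below -/
import Mathlib

section
/- Fix ε > 0, β ≥ 1 and α ≥ 32β with α large enough. There exists d₀ such that the following holds for all d ≥ d₀. Let G be a d-regular bipartite graph and let 𝒢 be a graph on α·d vertices with Δ(𝒢) ≤ β·δ(𝒢) and δ(𝒢) > d^ε. Then there exist a spanning subgraph H ⊆ G and a coloring χ : V(G) → V(𝒢) such that: (Q1) every v ∈ V(H) satisfies d_H(v) ≥ δ(𝒢)/(4α); (Q2) for every v ∈ V(H), the restriction of χ to N_H(v) is injective (every neighborhood is rainbow); and (Q3) for every edge uv ∈ E(H), χ(u)χ(v) ∈ E(𝒢). -/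
open SimpleGraph

def ContainsCopy {α β : Type*} (F : SimpleGraph α) (H : SimpleGraph β) : Prop :=
  ∃ f : F →g H, Function.Injective f

abbrev GraphFamily := Set (Σ n : ℕ, SimpleGraph (Fin n))

def FamFree {β : Type*} (H : SimpleGraph β) (𝓕 : GraphFamily) : Prop :=
  ∀ F ∈ 𝓕, ¬ ContainsCopy F.2 H

noncomputable def extremalNum (n : ℕ) (𝓕 : GraphFamily) : ℕ :=
  sSup {k | ∃ H : SimpleGraph (Fin n), FamFree H 𝓕 ∧ k = H.edgeSet.ncard}

def LocallyInjective {α β : Type*} {F : SimpleGraph α} {G : SimpleGraph β}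
    (φ : F →g G) : Prop :=
  ∀ v : α, Set.InjOn φ (F.neighborSet v)

def NoLocInjHom {α β : Type*} (F : SimpleGraph α) (G : SimpleGraph β) : Prop :=
  ¬ ∃ φ : F →g G, LocallyInjective φ

def ClosedFamily (𝓕 : GraphFamily) : Prop :=
  ∀ (W : Type) [Fintype W] (G : SimpleGraph W),
    (∀ F ∈ 𝓕, NoLocInjHom F.2 G) ↔ FamFree G 𝓕

noncomputable def deg {β : Type*} (H : SimpleGraph β) (v : β) : ℕ :=
  (H.neighborSet v).ncard

noncomputable def minDeg {β : Type*} [Fintype β] (H : SimpleGraph β) : ℕ :=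
  ⨅ v, deg H v

noncomputable def maxDeg {β : Type*} [Fintype β] (H : SimpleGraph β) : ℕ :=
  ⨆ v, deg H v

def RegularDeg {β : Type*} (G : SimpleGraph β) (d : ℕ) : Prop :=
  ∀ v, deg G v = d

noncomputable def Bad {α γ : Type*} (G : SimpleGraph α) (χ : α → γ) (v : α) : ℕ :=
  {u | u ∈ G.neighborSet v ∧ ∃ v', v' ∈ G.neighborSet u ∧ v' ≠ v ∧ χ v' = χ v}.ncard


/-! ### Finite uniform probability -/
section Prob
open Finset
open scoped Classical

noncomputable def pr {Ω : Type*} [Fintype Ω] (E : Ω → Prop) : ℝ :=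
  ((univ.filter E).card : ℝ) / (Fintype.card Ω : ℝ)

lemma pr_def {Ω : Type*} [Fintype Ω] (E : Ω → Prop) [DecidablePred E] :
    pr E = ((univ.filter E).card : ℝ) / (Fintype.card Ω : ℝ) := by
  unfold pr; congr!

lemma pr_eq_sum {Ω : Type*} [Fintype Ω] (E : Ω → Prop) [DecidablePred E] :
    pr E = (∑ f : Ω, if E f then (1:ℝ) else 0) / (Fintype.card Ω : ℝ) := by
  rw [Finset.sum_boole, pr_def]

lemma pr_nonneg {Ω : Type*} [Fintype Ω] (E : Ω → Prop) : 0 ≤ pr E := by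
  unfold pr; positivity

lemma pr_mono {Ω : Type*} [Fintype Ω] {E F : Ω → Prop} (h : ∀ f, E f → F f) : pr E ≤ pr F := by
  unfold pr
  gcongr with f
  exact h f

lemma pr_le_one {Ω : Type*} [Fintype Ω] (E : Ω → Prop) : pr E ≤ 1 := by
  unfold pr
  apply div_le_one_of_le₀ _ (by positivity)
  exact_mod_cast Finset.card_le_univ _

lemma pr_or {Ω : Type*} [Fintype Ω] (E F : Ω → Prop) : pr (fun f => E f ∨ F f) ≤ pr E + pr F := by
  rw [pr_def, pr_def, pr_def, ← add_div]
  gcongr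
  rw [Finset.filter_or]
  exact_mod_cast Finset.card_union_le _ _

lemma pr_exists {Ω ι : Type*} [Fintype Ω] (s : Finset ι) (E : ι → Ω → Prop) :
    pr (fun f => ∃ i ∈ s, E i f) ≤ ∑ i ∈ s, pr (E i) := by
  simp_rw [pr_eq_sum]
  rw [← Finset.sum_div, Finset.sum_comm]
  gcongr with f
  split_ifs with h
  · obtain ⟨i, hi, hE⟩ := h
    calc (1:ℝ) = if E i f then 1 else 0 := by simp [hE]
      _ ≤ _ := Finset.single_le_sum (f := fun i => if E i f then (1:ℝ) else 0)
        (fun j _ => by positivity) hi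
  · exact Finset.sum_nonneg (fun j _ => by positivity)

/-- Markov-type tail bound via counting subsets. -/
lemma pr_tail {Ω ι : Type*} [Fintype Ω] (P : Finset ι) (R : Finset ι → Ω → Prop)
    (E : Ω → Prop) (q : ℝ) (k : ℕ)
    (hR : ∀ K ⊆ P, pr (R K) ≤ q ^ K.card)
    (hE : ∀ f, E f → ∃ K₀ ⊆ P, k ≤ K₀.card ∧ ∀ K ⊆ K₀, R K f) :
    pr E ≤ (1 + q) ^ P.card / 2 ^ k := by
  rw [le_div_iff₀ (by positivity)]
  have h1 : (1 + q) ^ P.card = ∑ K ∈ P.powerset, q ^ K.card := by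
    have := Finset.prod_one_add (s := P) (f := fun _ => q)
    simpa using this
  rw [h1]
  calc pr E * 2 ^ k ≤ ∑ K ∈ P.powerset, pr (R K) := by
        simp_rw [pr_eq_sum]
        rw [← Finset.sum_div, Finset.sum_comm, div_mul_eq_mul_div, Finset.sum_mul]
        gcongr with f
        split_ifs with h
        · obtain ⟨K₀, hK, hk, hR'⟩ := hE f h
          rw [Finset.sum_boole, one_mul]
          calc (2:ℝ) ^ k ≤ 2 ^ K₀.card := by gcongr; norm_num
            _ = (K₀.powerset.card : ℝ) := by simp
            _ ≤ _ := by
              gcongr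
              intro K hK'
              simp only [mem_powerset, mem_filter] at *
              exact ⟨hK'.trans hK, hR' K hK'⟩
        · rw [zero_mul]; exact Finset.sum_nonneg (fun j _ => by positivity)
    _ ≤ _ := Finset.sum_le_sum (fun K hK => hR K (by simpa using hK))

variable {V C : Type*} [Fintype V] [Fintype C] [Nonempty C]

lemma pr_pi (K : Finset V) (A : V → Finset C) :
    pr (fun f : V → C => ∀ x ∈ K, f x ∈ A x) = ∏ x ∈ K, ((A x).card : ℝ) / Fintype.card C := by
  have hN : (Fintype.card C : ℝ) ≠ 0 := by exact_mod_cast Fintype.card_ne_zero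
  have h1 : (univ.filter (fun f : V → C => ∀ x ∈ K, f x ∈ A x))
      = Fintype.piFinset (fun x => if x ∈ K then A x else univ) := by
    ext f
    simp only [mem_filter, mem_univ, true_and, Fintype.mem_piFinset]
    refine forall_congr' fun x => ?_
    by_cases h : x ∈ K <;> simp [h]
  rw [pr_def, h1, Fintype.card_piFinset, Fintype.card_fun, ← Finset.card_univ (α := V)]
  push_cast
  rw [← Finset.prod_const, ← Finset.prod_div_distrib]
  rw [← Finset.prod_subset (Finset.subset_univ K)]
  · apply Finset.prod_congr rfl
    intro x hx; simp [hx]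
  · intro x _ hx; simp [hx, hN]

lemma pr_pi_le (K : Finset V) (A : V → Finset C) (q : ℝ)
    (h : ∀ x ∈ K, ((A x).card : ℝ) / Fintype.card C ≤ q) :
    pr (fun f : V → C => ∀ x ∈ K, f x ∈ A x) ≤ q ^ K.card := by
  rw [pr_pi, ← Finset.prod_const]
  exact Finset.prod_le_prod (fun x _ => by positivity) h

lemma pr_fix (K : Finset V) (c : V → C) :
    pr (fun f : V → C => ∀ x ∈ K, f x = c x) = (1 / (Fintype.card C : ℝ)) ^ K.card := by
  have := pr_pi K (fun x => ({c x} : Finset C))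
  simpa using this

/-- repeats -/
lemma pr_repeat (P K : Finset V) :
    pr (fun f : V → C => ∀ x ∈ K, ∃ y ∈ P \ K, f y = f x) ≤
      ((P.card : ℝ) / Fintype.card C) ^ K.card := by
  set N : ℝ := (Fintype.card C : ℝ)
  have hN : 0 < N := by simp only [N]; exact_mod_cast Fintype.card_pos
  have key : ∀ π : ↥K → V, (∀ x, π x ∉ K) →
      pr (fun f : V → C => ∀ x : ↥K, f (π x) = f x) ≤ (1/N) ^ K.card := by
    intro π hπ
    rw [pr_def, div_le_iff₀ (by exact_mod_cast Fintype.card_pos)]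
    have hcard : (univ.filter (fun f : V → C => ∀ x : ↥K, f (π x) = f x)).card ≤
        (Fintype.card C) ^ (Fintype.card V - K.card) := by
      have : (Fintype.card C) ^ (Fintype.card V - K.card) =
          Fintype.card ({x // x ∉ K} → C) := by
        rw [Fintype.card_fun, Fintype.card_subtype_compl]; simp
      rw [this, ← Finset.card_univ]
      apply Finset.card_le_card_of_injOn (fun f x => f x.1) (fun _ _ => by simp)
      intro f hf g hg hfg
      simp only [coe_filter, mem_univ, true_and, Set.mem_ofPred_eq] at hf hg
      funext x
      by_cases hx : x ∈ K
      · rw [← hf ⟨x, hx⟩, ← hg ⟨x, hx⟩]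
        exact congrFun hfg ⟨π ⟨x, hx⟩, hπ _⟩
      · exact congrFun hfg ⟨x, hx⟩
    calc ((univ.filter (fun f : V → C => ∀ x : ↥K, f (π x) = f x)).card : ℝ)
        ≤ N ^ (Fintype.card V - K.card) := by simp only [N]; exact_mod_cast hcard
      _ = (1/N) ^ K.card * N ^ (Fintype.card V) := by
        rw [← Nat.sub_add_cancel (Finset.card_le_univ K), pow_add, Nat.add_sub_cancel]
        have : (1/N)^K.card * N^K.card = 1 := by rw [← mul_pow]; field_simp; simp
        linear_combination (-N ^ (Fintype.card V - K.card)) * this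
      _ = _ := by rw [Fintype.card_fun]; push_cast; rfl
  calc pr (fun f : V → C => ∀ x ∈ K, ∃ y ∈ P \ K, f y = f x)
      ≤ pr (fun f : V → C => ∃ π ∈ Fintype.piFinset (fun _ : ↥K => P \ K),
          ∀ x : ↥K, f (π x) = f x) := by
        apply pr_mono
        intro f hf
        choose! y hy hy2 using hf
        refine ⟨fun x => y x.1, ?_, fun x => hy2 x.1 x.2⟩
        rw [Fintype.mem_piFinset]
        exact fun x => hy x.1 x.2
    _ ≤ ∑ π ∈ Fintype.piFinset (fun _ : ↥K => P \ K), (1/N) ^ K.card := by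
        refine (pr_exists _ _).trans (Finset.sum_le_sum fun π hπ => key π ?_)
        rw [Fintype.mem_piFinset] at hπ
        exact fun x => (Finset.mem_sdiff.1 (hπ x)).2
    _ = ((P \ K).card : ℝ) ^ K.card * (1/N) ^ K.card := by
        rw [Finset.sum_const, Fintype.card_piFinset]; simp
    _ ≤ (P.card : ℝ) ^ K.card * (1/N) ^ K.card := by
        gcongr; exact Finset.sdiff_subset
    _ = _ := by rw [← mul_pow]; congr 1; ring

/-- multilinear Markov bound -/
lemma pr_multi (K : Finset V) (L : V → Finset C) (ω : V → C → V → ℝ) (l s : ℝ)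
    (hω : ∀ x c y, 0 ≤ ω x c y) (hs : ∀ x ∈ K, ∀ c ∈ L x, ∑ y, ω x c y ≤ s) (h0 : 0 ≤ s)
    (hL : ∀ x ∈ K, ((L x).card : ℝ) ≤ l) :
    pr (fun f : V → C => Set.InjOn f K ∧ ∀ x ∈ K, f x ∈ L x ∧
      1 ≤ ∑ y, if y ≠ x ∧ f y = f x then ω x (f x) y else 0)
      ≤ (l * s / (Fintype.card C : ℝ) ^ 2) ^ K.card := by
  set N : ℝ := (Fintype.card C : ℝ) with hNdef
  have hN : 0 < N := by simp only [N]; exact_mod_cast Fintype.card_pos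
  have hC : (0:ℝ) < Fintype.card (V → C) := by exact_mod_cast Fintype.card_pos
  have key : ∀ p : ↥K → C × V,
      pr (fun f : V → C => Set.InjOn f K ∧ ∀ x : ↥K, f x = (p x).1 ∧ (p x).2 ≠ x ∧
        f (p x).2 = (p x).1) ≤ (1/N) ^ (2 * K.card) := by
    intro p
    by_cases hne : ∃ f₀ : V → C, Set.InjOn f₀ K ∧ ∀ x : ↥K, f₀ x = (p x).1 ∧ (p x).2 ≠ x ∧
        f₀ (p x).2 = (p x).1
    · obtain ⟨f₀, hinj, hf₀⟩ := hne
      set K2 : Finset V := univ.image (fun x : ↥K => (p x).2)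
      have hcard2 : K2.card = K.card := by
        rw [Finset.card_image_of_injective]
        · simp
        · intro x y hxy
          have : f₀ x = f₀ y := by
            rw [(hf₀ x).1, (hf₀ y).1, ← (hf₀ x).2.2, ← (hf₀ y).2.2]
            exact congrArg f₀ hxy
          exact Subtype.ext (hinj x.2 y.2 this)
      have hdisj : Disjoint K K2 := by
        rw [Finset.disjoint_left]
        intro z hz hz2
        obtain ⟨x, -, rfl⟩ := Finset.mem_image.1 hz2
        apply (hf₀ x).2.1
        apply hinj hz x.2
        rw [(hf₀ x).2.2, (hf₀ x).1]
      have : (1/N) ^ (2 * K.card) = pr (fun f : V → C => ∀ x ∈ K ∪ K2, f x = f₀ x) := by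
        rw [pr_fix, Finset.card_union_of_disjoint hdisj, hcard2, two_mul]
      rw [this]
      apply pr_mono
      rintro f ⟨-, hf⟩ x hx
      rcases Finset.mem_union.1 hx with hx | hx
      · rw [(hf ⟨x, hx⟩).1, (hf₀ ⟨x, hx⟩).1]
      · obtain ⟨y, -, rfl⟩ := Finset.mem_image.1 hx
        show f (p y).2 = f₀ (p y).2
        rw [(hf y).2.2, (hf₀ y).2.2]
    · have : pr (fun f : V → C => Set.InjOn f K ∧ ∀ x : ↥K, f x = (p x).1 ∧ (p x).2 ≠ x ∧
        f (p x).2 = (p x).1) ≤ pr (fun f : V → C => False) :=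
        pr_mono (fun f hf => hne ⟨f, hf⟩)
      refine this.trans ?_
      unfold pr; simp; positivity
  -- pointwise bound
  have hpt : ∀ f : V → C, (if (Set.InjOn f K ∧ ∀ x ∈ K, f x ∈ L x ∧
      1 ≤ ∑ y, if y ≠ x ∧ f y = f x then ω x (f x) y else 0) then (1:ℝ) else 0) ≤
      ∑ p ∈ Fintype.piFinset (fun x : ↥K => L x ×ˢ (univ : Finset V)),
        (∏ x : ↥K, ω x (p x).1 (p x).2) *
          (if (Set.InjOn f K ∧ ∀ x : ↥K, f x = (p x).1 ∧ (p x).2 ≠ x ∧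
        f (p x).2 = (p x).1) then (1:ℝ) else 0) := by
    intro f
    split_ifs with h
    · obtain ⟨hinj, h⟩ := h
      calc (1:ℝ) ≤ ∏ x : ↥K, ∑ q ∈ L x ×ˢ (univ : Finset V),
            (if (f x = q.1 ∧ q.2 ≠ x ∧ f q.2 = q.1) then ω x q.1 q.2 else 0) := by
            have h1 : (1:ℝ) = ∏ x : ↥K, (1:ℝ) := by simp
            rw [h1]
            apply Finset.prod_le_prod (fun _ _ => zero_le_one)
            rintro x -
            refine (h x x.2).2.trans ?_
            rw [Finset.sum_product]
            refine le_trans ?_ (Finset.single_le_sum (f := fun c => ∑ y : V,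
              (if (f x = c ∧ y ≠ x ∧ f y = c) then ω x c y else 0)) (fun c _ => ?_) (h x x.2).1)
            · apply le_of_eq
              apply Finset.sum_congr rfl
              intro y _
              simp
            · apply Finset.sum_nonneg
              intro y _
              have := hω x c y
              positivity
        _ = ∑ p ∈ Fintype.piFinset (fun x : ↥K => L x ×ˢ (univ : Finset V)),
            ∏ x : ↥K, (if (f x = (p x).1 ∧ (p x).2 ≠ x ∧ f (p x).2 = (p x).1)
              then ω x (p x).1 (p x).2 else 0) := by
            rw [Finset.prod_univ_sum]
        _ ≤ _ := by
            apply Finset.sum_le_sum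
            intro p _
            by_cases hp : ∀ x : ↥K, f x = (p x).1 ∧ (p x).2 ≠ x ∧ f (p x).2 = (p x).1
            · rw [if_pos ⟨hinj, hp⟩, mul_one]
              apply le_of_eq
              exact Finset.prod_congr rfl (fun x _ => if_pos (hp x))
            · push Not at hp
              obtain ⟨x, hx⟩ := hp
              rw [Finset.prod_eq_zero (Finset.mem_univ x)]
              · have : 0 ≤ ∏ x : ↥K, ω x (p x).1 (p x).2 := Finset.prod_nonneg (fun _ _ => hω _ _ _)
                positivity
              · rw [if_neg]; rintro ⟨a, b, c⟩; exact hx a b c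
    · apply Finset.sum_nonneg
      intro p _
      have : 0 ≤ ∏ x : ↥K, ω x (p x).1 (p x).2 := Finset.prod_nonneg (fun _ _ => hω _ _ _)
      positivity
  calc _ ≤ (∑ f : V → C, ∑ p ∈ Fintype.piFinset (fun x : ↥K => L x ×ˢ (univ : Finset V)),
        (∏ x : ↥K, ω x (p x).1 (p x).2) *
          (if (Set.InjOn f K ∧ ∀ x : ↥K, f x = (p x).1 ∧ (p x).2 ≠ x ∧
        f (p x).2 = (p x).1) then (1:ℝ) else 0)) / Fintype.card (V → C) := by
        rw [pr_eq_sum]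
        gcongr with f
        exact hpt f
    _ = ∑ p ∈ Fintype.piFinset (fun x : ↥K => L x ×ˢ (univ : Finset V)),
        (∏ x : ↥K, ω x (p x).1 (p x).2) * pr (fun f : V → C => Set.InjOn f K ∧
          ∀ x : ↥K, f x = (p x).1 ∧ (p x).2 ≠ x ∧ f (p x).2 = (p x).1) := by
        rw [Finset.sum_comm, Finset.sum_div]
        apply Finset.sum_congr rfl
        intro p _
        rw [pr_eq_sum, ← Finset.mul_sum, mul_div_assoc]
    _ ≤ ∑ p ∈ Fintype.piFinset (fun x : ↥K => L x ×ˢ (univ : Finset V)),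
        (∏ x : ↥K, ω x (p x).1 (p x).2) * (1/N) ^ (2 * K.card) := by
        apply Finset.sum_le_sum
        intro p _
        exact mul_le_mul_of_nonneg_left (key p) (Finset.prod_nonneg (fun _ _ => hω _ _ _))
    _ = (∏ x : ↥K, ∑ q ∈ L x ×ˢ (univ : Finset V), ω x q.1 q.2) * (1/N) ^ (2 * K.card) := by
        rw [← Finset.sum_mul, Finset.prod_univ_sum]
    _ ≤ (∏ x : ↥K, (l * s)) * (1/N) ^ (2 * K.card) := by
        gcongr with x
        · intro x _; exact Finset.sum_nonneg (fun _ _ => hω _ _ _)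
        · rw [Finset.sum_product]
          calc ∑ c ∈ L x, ∑ y, ω x c y ≤ ∑ c ∈ L x, s := Finset.sum_le_sum (hs x x.2)
            _ = (L x).card * s := by simp
            _ ≤ _ := by gcongr; exact hL x x.2
    _ = _ := by
        rw [pow_mul, Finset.prod_const, Finset.card_univ, Fintype.card_coe, ← mul_pow]
        congr 1
        ring

end Prob
/-! ### Merging, independence, local lemma -/
section LLL
open Finset
open scoped Classical

variable {V C : Type*} [Fintype V] [Fintype C] [Nonempty C]

noncomputable def mrg (S : Finset V) (f h : V → C) : V → C := fun x => if x ∈ S then h x else f x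

lemma mrg_mem {S : Finset V} {f h : V → C} {x : V} (hx : x ∈ S) : mrg S f h x = h x := if_pos hx
lemma mrg_not {S : Finset V} {f h : V → C} {x : V} (hx : x ∉ S) : mrg S f h x = f x := if_neg hx

lemma sum_mrg (S : Finset V) (F : (V → C) → (V → C) → ℝ) :
    ∑ f, ∑ h, F (mrg S f h) (mrg S h f) = ∑ f, ∑ h, F f h := by
  rw [← Fintype.sum_prod_type', ← Fintype.sum_prod_type']
  let e : (V → C) × (V → C) → (V → C) × (V → C) := fun p => (mrg S p.1 p.2, mrg S p.2 p.1)
  have he : Function.Involutive e := by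
    rintro ⟨f, h⟩
    simp only [e]
    ext x <;> by_cases hx : x ∈ S <;> simp [mrg, hx]
  exact Fintype.sum_bijective e he.bijective _ _ (fun p => rfl)

/-- conditioning -/
lemma pr_cond (S : Finset V) (Q : (V → C) → Prop) (p : ℝ)
    (h : ∀ f, pr (fun h => Q (mrg S f h)) ≤ p) : pr Q ≤ p := by
  have hC : (0:ℝ) < Fintype.card (V → C) := by exact_mod_cast Fintype.card_pos
  have h1 := sum_mrg S (fun f _ => if Q f then (1:ℝ) else 0)
  have h2 : ∀ f, (∑ h, if Q (mrg S f h) then (1:ℝ) else 0) ≤ p * Fintype.card (V → C) := by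
    intro f
    have := h f
    rwa [pr_eq_sum, div_le_iff₀ hC] at this
  rw [pr_eq_sum, div_le_iff₀ hC]
  have h3 : ∑ f : V → C, ∑ h : V → C, (if Q (mrg S f h) then (1:ℝ) else 0) ≤
     ∑ f : V → C, p * Fintype.card (V → C) := Finset.sum_le_sum (fun f _ => h2 f)
  rw [h1] at h3
  simp only [sum_const, card_univ, nsmul_eq_mul, ← Finset.mul_sum] at h3
  exact le_of_mul_le_mul_left h3 hC

lemma pr_indep (S : Finset V) (P Q : (V → C) → Prop)
    (hP : ∀ f g, (∀ x ∈ S, f x = g x) → (P f ↔ P g))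
    (hQ : ∀ f g, (∀ x, x ∉ S → f x = g x) → (Q f ↔ Q g)) :
    pr (fun f => P f ∧ Q f) = pr P * pr Q := by
  have hC : (0:ℝ) < Fintype.card (V → C) := by exact_mod_cast Fintype.card_pos
  have h1 := sum_mrg S (fun f h => (if P f ∧ Q f then (1:ℝ) else 0))
  have h2 : ∀ f h : V → C, (if P (mrg S f h) ∧ Q (mrg S f h) then (1:ℝ) else 0) =
      (if Q f then 1 else 0) * (if P h then 1 else 0) := by
    intro f h
    have a : P (mrg S f h) ↔ P h := hP _ _ (fun x hx => mrg_mem hx)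
    have b : Q (mrg S f h) ↔ Q f := hQ _ _ (fun x hx => mrg_not hx)
    by_cases h3 : P h <;> by_cases h4 : Q f <;> simp [a, b, h3, h4]
  simp_rw [h2] at h1
  simp only [← Finset.mul_sum, ← Finset.sum_mul, sum_const, card_univ, nsmul_eq_mul] at h1
  rw [pr_eq_sum, pr_eq_sum, pr_eq_sum]
  field_simp
  linarith

theorem lll {ι : Type*} [Fintype ι] (E : ι → (V → C) → Prop) (S : ι → Finset V)
    (hdep : ∀ i f g, (∀ x ∈ S i, f x = g x) → (E i f ↔ E i g))
    (D : ℕ) (hD : ∀ i, (univ.filter (fun j => ¬ Disjoint (S i) (S j))).card ≤ D)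
    (p : ℝ) (hp : ∀ i, pr (E i) ≤ p) (hp0 : 0 ≤ p) (hpD : 4 * p * D ≤ 1) (hD1 : 1 ≤ D) :
    ∃ f, ∀ i, ¬ E i f := by
  have hC : (0:ℝ) < Fintype.card (V → C) := by exact_mod_cast Fintype.card_pos
  have hD1' : (1:ℝ) ≤ D := by exact_mod_cast hD1
  set g : Finset ι → ℝ := fun T => pr (fun f => ∀ j ∈ T, ¬ E j f) with hg
  have hgmono : ∀ T T', T ⊆ T' → g T' ≤ g T := fun T T' h => pr_mono (fun f hf j hj => hf j (h hj))
  have main : ∀ n : ℕ, ∀ T : Finset ι, T.card ≤ n → ∀ i,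
      pr (fun f => E i f ∧ ∀ j ∈ T, ¬ E j f) ≤ 2 * p * g T := by
    intro n
    induction n using Nat.strong_induction_on with
    | _ n ih =>
    intro T hT i
    set T1 := T.filter (fun j => ¬ Disjoint (S i) (S j)) with hT1
    set T2 := T.filter (fun j => Disjoint (S i) (S j)) with hT2
    have hT2T : T2 ⊆ T := Finset.filter_subset _ _
    have h1 : pr (fun f => E i f ∧ ∀ j ∈ T, ¬ E j f) ≤ p * g T2 := by
      calc _ ≤ pr (fun f => E i f ∧ ∀ j ∈ T2, ¬ E j f) :=
            pr_mono (fun f hf => ⟨hf.1, fun j hj => hf.2 j (hT2T hj)⟩)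
        _ = pr (E i) * g T2 := by
            apply pr_indep (S i) (E i) _ (hdep i)
            intro f f' hff
            refine forall₂_congr fun j hj => not_congr (hdep j f f' fun x hx => hff x ?_)
            exact fun hx2 => (Finset.disjoint_left.1 (Finset.mem_filter.1 hj).2) hx2 hx
        _ ≤ _ := mul_le_mul_of_nonneg_right (hp i) (pr_nonneg _)
    have h2 : g T2 ≤ 2 * g T := by
      by_cases hT1e : T1 = ∅
      · have : T2 = T := by
          apply Finset.filter_true_of_mem
          intro j hj
          by_contra hcon
          have : j ∈ T1 := Finset.mem_filter.2 ⟨hj, hcon⟩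
          simp [hT1e] at this
        rw [this]
        have := pr_nonneg (fun f => ∀ j ∈ T, ¬ E j f)
        simp only [hg]; linarith
      · obtain ⟨j0, hj0⟩ := Finset.nonempty_iff_ne_empty.2 hT1e
        have hlt : T2.card < T.card := by
          apply Finset.card_lt_card
          refine ⟨hT2T, fun hh => ?_⟩
          have := Finset.mem_filter.1 hj0
          exact this.2 (Finset.mem_filter.1 (hh this.1)).2
        have h3 : g T2 ≤ g T + ∑ j ∈ T1, pr (fun f => E j f ∧ ∀ k ∈ T2, ¬ E k f) := by
          refine le_trans ?_ (add_le_add_right (pr_exists T1 _) _)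
          refine le_trans ?_ (pr_or _ _)
          apply pr_mono
          intro f hf
          by_cases hall : ∀ j ∈ T, ¬ E j f
          · exact Or.inl hall
          · push Not at hall
            obtain ⟨j, hj, hE⟩ := hall
            right
            refine ⟨j, Finset.mem_filter.2 ⟨hj, fun hd => ?_⟩, hE, hf⟩
            exact hf j (Finset.mem_filter.2 ⟨hj, hd⟩) hE
        have h4 : ∑ j ∈ T1, pr (fun f => E j f ∧ ∀ k ∈ T2, ¬ E k f) ≤ D * (2 * p * g T2) := by
          calc _ ≤ ∑ j ∈ T1, 2 * p * g T2 :=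
                Finset.sum_le_sum (fun j _ => ih T2.card (lt_of_lt_of_le hlt hT) T2 le_rfl j)
            _ = T1.card * (2 * p * g T2) := by simp
            _ ≤ _ := by
              have : T1.card ≤ D := (Finset.card_le_card (Finset.filter_subset_filter _
                (Finset.subset_univ T))).trans (hD i)
              have := pr_nonneg (fun f => ∀ j ∈ T2, ¬ E j f)
              have : 0 ≤ g T2 := this
              gcongr
        have : 0 ≤ g T2 := pr_nonneg (fun f => ∀ j ∈ T2, ¬ E j f)
        nlinarith
    nlinarith
  have hpos : ∀ T : Finset ι, 0 < g T := by
    intro T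
    induction T using Finset.induction_on with
    | empty => simp only [hg]; rw [pr_def]; simp
    | insert i T hi ih =>
      have h1 := main T.card T le_rfl i
      have h2 : g T ≤ g (insert i T) + pr (fun f => E i f ∧ ∀ j ∈ T, ¬ E j f) := by
        refine le_trans ?_ (pr_or _ _)
        apply pr_mono
        intro f hf
        by_cases hE : E i f
        · exact Or.inr ⟨hE, hf⟩
        · left
          intro j hj
          rcases Finset.mem_insert.1 hj with rfl | hj
          · exact hE
          · exact hf j hj
      have h3 : p ≤ 1/4 := by nlinarith
      nlinarith
  by_contra hcon
  push Not at hcon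
  have h1 := hpos univ
  have h2 : g univ = 0 := by
    simp only [hg]; rw [pr_def, Finset.filter_false_of_mem]
    · simp
    · intro f _ hf
      obtain ⟨i, hi⟩ := hcon f
      exact hf i (mem_univ _) hi
  linarith

/-- balls -/
noncomputable def bl (nb : V → Finset V) : ℕ → V → Finset V
  | 0, v => {v}
  | n+1, v => bl nb n v ∪ (bl nb n v).biUnion nb

lemma bl_card (nb : V → Finset V) (d : ℕ) (hd : ∀ v, (nb v).card ≤ d) (n : ℕ) (v : V) :
    (bl nb n v).card ≤ (d+1)^n := by
  induction n with
  | zero => simp [bl]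
  | succ n ih =>
    calc _ ≤ (bl nb n v).card + (bl nb n v).card * d := by
          refine (Finset.card_union_le _ _).trans (Nat.add_le_add_left ?_ _)
          exact Finset.card_biUnion_le_card_mul _ _ _ (fun x _ => hd x)
      _ = (bl nb n v).card * (d+1) := by ring
      _ ≤ _ := by rw [pow_succ]; gcongr

lemma bl_mono (nb : V → Finset V) {m n : ℕ} (h : m ≤ n) (v : V) : bl nb m v ⊆ bl nb n v := by
  induction h with
  | refl => exact subset_rfl
  | step _ ih => exact ih.trans Finset.subset_union_left

lemma bl_step (nb : V → Finset V) {n : ℕ} {v w x : V} (h : w ∈ bl nb n v) (hx : x ∈ nb w) :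
    x ∈ bl nb (n+1) v := Finset.mem_union_right _ (Finset.mem_biUnion.2 ⟨w, h, hx⟩)

lemma bl_trans (nb : V → Finset V) {m n : ℕ} {v w x : V} (h : w ∈ bl nb n v) (hx : x ∈ bl nb m w) :
    x ∈ bl nb (n+m) v := by
  induction m generalizing x with
  | zero => simp [bl] at hx; subst hx; exact h
  | succ m ih =>
    rcases Finset.mem_union.1 hx with hx | hx
    · exact bl_mono nb (by omega) v (ih hx)
    · obtain ⟨y, hy, hxy⟩ := Finset.mem_biUnion.1 hx
      exact bl_step nb (ih hy) hxy

lemma bl_symm (nb : V → Finset V) (hs : ∀ v w, w ∈ nb v → v ∈ nb w) {n : ℕ} {v w : V}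
    (h : w ∈ bl nb n v) : v ∈ bl nb n w := by
  induction n generalizing w with
  | zero => simp [bl] at h ⊢; exact h.symm
  | succ n ih =>
    rcases Finset.mem_union.1 h with hx | hx
    · exact bl_mono nb (by omega) w (ih hx)
    · obtain ⟨y, hy, hxy⟩ := Finset.mem_biUnion.1 hx
      have h1 : y ∈ bl nb 1 w := bl_step nb (n := 0) (by simp [bl]) (hs _ _ hxy)
      have := bl_trans nb h1 (ih hy)
      rwa [add_comm] at this

theorem lll_ball (nb : V → Finset V) (d : ℕ) (hd : ∀ v, (nb v).card ≤ d)
    (hs : ∀ v w, w ∈ nb v → v ∈ nb w) (E : V → (V → C) → Prop)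
    (hdep : ∀ v f g, (∀ x ∈ bl nb 3 v, f x = g x) → (E v f → E v g))
    (hp : ∀ v, pr (E v) ≤ 1 / (4 * ((d:ℝ)+1)^6)) : ∃ f, ∀ v, ¬ E v f := by
  apply lll E (bl nb 3) (fun i f g h => ⟨hdep i f g h, hdep i g f (fun x hx => (h x hx).symm)⟩)
    ((d+1)^6) ?_ _ hp (by positivity) ?_ (Nat.one_le_pow _ _ (by omega))
  · intro v
    refine le_trans (Finset.card_le_card ?_) (bl_card nb d hd 6 v)
    intro w hw
    obtain ⟨x, hx1, hx2⟩ := Finset.not_disjoint_iff.1 (Finset.mem_filter.1 hw).2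
    exact bl_trans nb hx1 (bl_symm nb hs hx2)
  · push_cast
    apply le_of_eq
    field_simp

end LLL

/-! ### Extension lemma -/
section Extension
open Finset
open scoped Classical

variable {V C : Type*} [Fintype V] [Fintype C] [Nonempty C]

lemma tail_num (q : ℝ) (n k : ℕ) (hq : 0 ≤ q) (h : q * n ≤ k / 4) :
    (1 + q) ^ n / 2 ^ k ≤ (2/3 : ℝ) ^ k := by
  rw [div_le_iff₀ (by positivity), ← mul_pow]
  calc (1+q)^n ≤ (Real.exp q)^n := by
        gcongr
        linarith [Real.add_one_le_exp q]
    _ = Real.exp (q * n) := by rw [← Real.exp_nat_mul]; ring_nf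
    _ ≤ Real.exp (k * (1/4)) := by apply Real.exp_le_exp.2; linarith
    _ = (Real.exp (1/4))^k := by rw [Real.exp_nat_mul]
    _ ≤ (2/3*2)^k := by
        gcongr
        have h1 : Real.exp (1/4) ^ 4 = Real.exp 1 := by
          rw [← Real.exp_nat_mul]; norm_num
        have h2 := Real.exp_one_lt_d9
        by_contra hc
        push Not at hc
        have : (2/3*2:ℝ)^4 ≤ Real.exp (1/4) ^ 4 := by gcongr
        rw [h1] at this
        norm_num at this h2
        linarith

def ExtGoal (X : Finset V) (W : V → Finset V) (Lv U : V → Finset C) (h : ℝ) : Prop :=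
  ∃ f : V → C, ∃ F : V → Finset V, ∀ x ∈ X, F x ⊆ W x ∧ h ≤ ((F x).card : ℝ) ∧
    (∀ v ∈ F x, f x ∈ Lv v ∧ f x ∉ U v) ∧
    ∀ x' ∈ X, x ≠ x' → ∀ v, v ∈ F x → v ∈ F x' → f x ≠ f x'

lemma ext_base (W : V → Finset V) (Lv : V → Finset C) (m B : ℝ) (d : ℕ)
    (hB : d * B ≤ Fintype.card C * (m/2)) (hB0 : 0 ≤ B) (X : Finset V) :
    ∀ (U : V → Finset C), (∀ x ∈ X, (W x).card ≤ d) →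
    (∀ x ∈ X, ∀ c, m ≤ ((W x).filter (fun v => c ∈ Lv v)).card) →
    (∀ v, ((U v).card : ℝ) + (X.filter (fun x => v ∈ W x)).card ≤ B) →
    ExtGoal X W Lv U (m/2) := by
  induction X using Finset.induction_on with
  | empty => intro U _ _ _; exact ⟨fun _ => Classical.arbitrary C, fun _ => ∅, by simp⟩
  | insert x X hx ih =>
    intro U hW hm hU
    have hN : (0:ℝ) < Fintype.card C := by exact_mod_cast Fintype.card_pos
    obtain ⟨c, hc⟩ : ∃ c : C, (((W x).filter (fun v => c ∈ U v)).card : ℝ) ≤ m/2 := by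
      by_contra hcon
      push Not at hcon
      have h1 : ∑ c : C, (m/2) < ∑ c : C, (((W x).filter (fun v => c ∈ U v)).card : ℝ) :=
        Finset.sum_lt_sum_of_nonempty univ_nonempty (fun c _ => hcon c)
      have h2 : ∑ c : C, (((W x).filter (fun v => c ∈ U v)).card : ℝ) = ∑ v ∈ W x, ((U v).card : ℝ) := by
        simp_rw [← Finset.sum_boole]
        rw [Finset.sum_comm]
        simp
      have h3 : ∑ v ∈ W x, ((U v).card : ℝ) ≤ ∑ v ∈ W x, B := by
        apply Finset.sum_le_sum
        intro v _
        have := hU v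
        have h : (0:ℝ) ≤ ((insert x X).filter (fun x => v ∈ W x)).card := by positivity
        linarith
      have h4 : ((W x).card : ℝ) ≤ d := by exact_mod_cast hW x (mem_insert_self _ _)
      simp only [Finset.sum_const, nsmul_eq_mul, Finset.card_univ] at h1 h3
      nlinarith
    set U' : V → Finset C := fun v => if v ∈ W x then insert c (U v) else U v with hU'
    obtain ⟨f, F, hF⟩ := ih U' (fun y hy => hW y (mem_insert_of_mem hy))
      (fun y hy => hm y (mem_insert_of_mem hy)) (by
        intro v
        have := hU v
        rw [Finset.filter_insert] at this
        simp only [hU']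
        split_ifs at this ⊢ with hv
        · rw [Finset.card_insert_of_notMem (by simp [hx])] at this
          have h := Finset.card_insert_le c (U v)
          have h' : ((insert c (U v)).card : ℝ) ≤ (U v).card + 1 := by exact_mod_cast h
          push_cast at this
          linarith
        · exact this)
    have hne : ∀ y ∈ X, y ≠ x := fun y hy h => hx (h ▸ hy)
    have key : ∀ y ∈ X, ∀ v, v ∈ F y → v ∈ W x → f y ≠ c := by
      intro y hy v hv hvx
      have := ((hF y hy).2.2.1 v hv).2
      simp only [hU', if_pos hvx, mem_insert] at this
      tauto
    have key2 : ∀ y ∈ X, ∀ v, v ∈ F y → f y ∈ Lv v ∧ f y ∉ U v := by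
      intro y hy v hv
      have := ((hF y hy).2.2.1 v hv)
      refine ⟨this.1, fun h => this.2 ?_⟩
      simp only [hU']
      split_ifs
      · exact mem_insert_of_mem h
      · exact h
    refine ⟨Function.update f x c,
      Function.update F x ((W x).filter (fun v => c ∈ Lv v ∧ c ∉ U v)), ?_⟩
    intro y hy
    rcases mem_insert.1 hy with rfl | hyX
    · simp only [Function.update_self]
      refine ⟨filter_subset _ _, ?_, fun v hv => (mem_filter.1 hv).2, ?_⟩
      · have h1 := hm y (mem_insert_self _ _) c
        have h2 : ((W y).filter (fun v => c ∈ Lv v)).card ≤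
          ((W y).filter (fun v => c ∈ Lv v ∧ c ∉ U v)).card + ((W y).filter (fun v => c ∈ U v)).card := by
          refine le_trans (Finset.card_le_card ?_) (Finset.card_union_le _ _)
          intro v hv
          simp only [mem_union, mem_filter] at hv ⊢
          tauto
        have h3 : (((W y).filter (fun v => c ∈ Lv v)).card : ℝ) ≤
          ((W y).filter (fun v => c ∈ Lv v ∧ c ∉ U v)).card + ((W y).filter (fun v => c ∈ U v)).card := by
          exact_mod_cast h2
        linarith
      · intro x' hx' hne' v hv hv'
        rcases mem_insert.1 hx' with rfl | hx'
        · exact absurd rfl hne'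
        · rw [Function.update_of_ne (hne x' hx')] at hv' ⊢
          exact (key x' hx' v hv' (mem_filter.1 hv).1).symm
    · simp only [Function.update_of_ne (hne y hyX)]
      refine ⟨(hF y hyX).1, (hF y hyX).2.1, fun v hv => key2 y hyX v hv, ?_⟩
      intro x' hx' hne' v hv hv'
      rcases mem_insert.1 hx' with rfl | hx'
      · rw [Function.update_self] at hv' ⊢
        exact key y hyX v hv (mem_filter.1 hv').1
      · rw [Function.update_of_ne (hne x' hx')] at hv' ⊢
        exact (hF y hyX).2.2.2 x' hx' hne' v hv hv'

/-- good neighbours of `x` under `f` -/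
noncomputable def gd (X : Finset V) (W : V → Finset V) (Lv U : V → Finset C) (f : V → C) (x : V) : Finset V :=
  (W x).filter (fun v => f x ∈ Lv v ∧ f x ∉ U v ∧ ∀ x' ∈ X, v ∈ W x' → x' ≠ x → f x' ≠ f x)

def fl (X : Finset V) (W : V → Finset V) (Lv U : V → Finset C) (f : V → C) (x : V) : Prop :=
  ((gd X W Lv U f x).card : ℝ) < ((W x).filter (fun v => f x ∈ Lv v)).card / 2

lemma ext_step (X : Finset V) (W : V → Finset V) (Lv U : V → Finset C) (m : ℝ) (f : V → C)
    (hm : ∀ x ∈ X, ∀ c, m ≤ ((W x).filter (fun v => c ∈ Lv v)).card)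
    (h : ExtGoal (X.filter (fl X W Lv U f)) W Lv
      (fun v => U v ∪ (X.filter (fun x => v ∈ W x ∧ f x ∈ Lv v)).image f) (m/2)) :
    ExtGoal X W Lv U (m/2) := by
  obtain ⟨g, F, hF⟩ := h
  refine ⟨fun x => if fl X W Lv U f x then g x else f x,
    fun x => if fl X W Lv U f x then F x else gd X W Lv U f x, ?_⟩
  have key : ∀ x ∈ X, fl X W Lv U f x → ∀ x' ∈ X, ∀ v, v ∈ F x → v ∈ gd X W Lv U f x' → g x ≠ f x' := by
    intro x hx hfx x' hx' v hv hv' heq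
    have h1 := ((hF x (mem_filter.2 ⟨hx, hfx⟩)).2.2.1 v hv).2
    apply h1
    rw [heq]
    apply mem_union_right
    apply mem_image_of_mem
    simp only [gd, mem_filter] at hv' ⊢
    exact ⟨hx', hv'.1, hv'.2.1⟩
  intro x hx
  by_cases hfx : fl X W Lv U f x
  · simp only [if_pos hfx]
    obtain ⟨h1, h2, h3, h4⟩ := hF x (mem_filter.2 ⟨hx, hfx⟩)
    refine ⟨h1, h2, fun v hv => ⟨(h3 v hv).1, fun hc => (h3 v hv).2 (mem_union_left _ hc)⟩, ?_⟩
    intro x' hx' hne v hv hv'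
    by_cases hfx' : fl X W Lv U f x'
    · simp only [if_pos hfx'] at hv' ⊢
      exact h4 x' (mem_filter.2 ⟨hx', hfx'⟩) hne v hv hv'
    · simp only [if_neg hfx'] at hv' ⊢
      exact key x hx hfx x' hx' v hv hv'
  · simp only [if_neg hfx]
    refine ⟨filter_subset _ _, ?_, ?_, ?_⟩
    · have := hm x hx (f x)
      unfold fl at hfx
      push Not at hfx
      linarith
    · intro v hv
      simp only [gd, mem_filter] at hv
      exact ⟨hv.2.1, hv.2.2.1⟩
    · intro x' hx' hne v hv hv'
      by_cases hfx' : fl X W Lv U f x'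
      · simp only [if_pos hfx'] at hv' ⊢
        exact (key x' hx' hfx' x hx v hv' hv).symm
      · simp only [if_neg hfx'] at hv' ⊢
        simp only [gd, mem_filter] at hv hv'
        exact (hv.2.2.2 x' hx' hv'.1 hne.symm).symm

end Extension

section ExtRand
open Finset
open scoped Classical

variable {V C : Type*} [Fintype V] [Fintype C] [Nonempty C]

noncomputable def cw (X : Finset V) (W : V → Finset V) (Lv : V → Finset C) (x : V) (c : C) (y : V) : ℝ :=
  4 * (((W x).filter (fun v => c ∈ Lv v ∧ y ∈ X ∧ v ∈ W y)).card : ℝ) /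
    ((W x).filter (fun v => c ∈ Lv v)).card

noncomputable def zs (W : V → Finset V) (Lv U : V → Finset C) (x : V) : Finset C :=
  univ.filter (fun c => (((W x).filter (fun v => c ∈ Lv v)).card : ℝ) / 4 ≤
    ((W x).filter (fun v => c ∈ U v)).card)

lemma fl_split (X : Finset V) (W : V → Finset V) (Lv U : V → Finset C) (f : V → C) (x : V)
    (m : ℝ) (hm0 : 0 < m) (hm : ∀ c, m ≤ ((W x).filter (fun v => c ∈ Lv v)).card)
    (h : fl X W Lv U f x) : f x ∈ zs W Lv U x ∨
      1 ≤ ∑ y, if y ≠ x ∧ f y = f x then cw X W Lv x (f x) y else 0 := by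
  by_cases hz : f x ∈ zs W Lv U x
  · exact Or.inl hz
  right
  have hw := hm0.trans_le (hm (f x))
  simp only [zs, mem_filter, mem_univ, true_and, not_le] at hz
  unfold fl at h
  rw [← Finset.sum_filter]
  unfold cw
  rw [← Finset.sum_div, ← Finset.mul_sum, le_div_iff₀ hw]
  have h2 : ((W x).filter (fun v => f x ∈ Lv v)).card ≤ (gd X W Lv U f x).card +
      ((W x).filter (fun v => f x ∈ U v)).card +
      ∑ y ∈ univ.filter (fun y => y ≠ x ∧ f y = f x),
        ((W x).filter (fun v => f x ∈ Lv v ∧ y ∈ X ∧ v ∈ W y)).card := by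
    refine le_trans (Finset.card_le_card (t := (gd X W Lv U f x ∪ ((W x).filter (fun v => f x ∈ U v))) ∪
      (univ.filter (fun y => y ≠ x ∧ f y = f x)).biUnion
        (fun y => (W x).filter (fun v => f x ∈ Lv v ∧ y ∈ X ∧ v ∈ W y))) ?_) ?_
    · intro v hv
      simp only [mem_union, mem_filter, mem_biUnion, mem_univ, true_and, gd] at hv ⊢
      by_cases h1 : f x ∈ U v
      · tauto
      by_cases h2 : ∀ x' ∈ X, v ∈ W x' → x' ≠ x → f x' ≠ f x
      · tauto
      push Not at h2
      obtain ⟨y, hy1, hy2, hy3, hy4⟩ := h2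
      exact Or.inr ⟨y, ⟨hy3, hy4⟩, hv.1, hv.2, hy1, hy2⟩
    · refine (Finset.card_union_le _ _).trans (Nat.add_le_add (Finset.card_union_le _ _) ?_)
      exact Finset.card_biUnion_le
  have h3 : (((W x).filter (fun v => f x ∈ Lv v)).card : ℝ) ≤ (gd X W Lv U f x).card +
      ((W x).filter (fun v => f x ∈ U v)).card +
      ∑ y ∈ univ.filter (fun y => y ≠ x ∧ f y = f x),
        (((W x).filter (fun v => f x ∈ Lv v ∧ y ∈ X ∧ v ∈ W y)).card : ℝ) := by exact_mod_cast h2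
  linarith

lemma zs_card (W : V → Finset V) (Lv U : V → Finset C) (x : V) (m u : ℝ) (d : ℕ)
    (hm : ∀ c, m ≤ ((W x).filter (fun v => c ∈ Lv v)).card) (hm0 : 0 < m)
    (hW : (W x).card ≤ d) (hu : ∀ v, ((U v).card : ℝ) ≤ u)
    (hZ : 4 * d * u ≤ m * Fintype.card C / 64) :
    ((zs W Lv U x).card : ℝ) / Fintype.card C ≤ 1 / 64 := by
  have hN : (0:ℝ) < Fintype.card C := by exact_mod_cast Fintype.card_pos
  rw [div_le_iff₀ hN]
  have h2 : ∑ c : C, (((W x).filter (fun v => c ∈ U v)).card : ℝ) = ∑ v ∈ W x, ((U v).card : ℝ) := by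
    simp_rw [← Finset.sum_boole]
    rw [Finset.sum_comm]
    simp
  have h3 : ∑ v ∈ W x, ((U v).card : ℝ) ≤ ∑ v ∈ W x, u := Finset.sum_le_sum (fun v _ => hu v)
  have h4 : ((W x).card : ℝ) ≤ d := by exact_mod_cast hW
  have h1 : ∑ c ∈ zs W Lv U x, (m/4) ≤ ∑ c ∈ zs W Lv U x, (((W x).filter (fun v => c ∈ U v)).card : ℝ) := by
    apply Finset.sum_le_sum
    intro c hc
    simp only [zs, mem_filter, mem_univ, true_and] at hc
    linarith [hm c]
  have h5 : ∑ c ∈ zs W Lv U x, (((W x).filter (fun v => c ∈ U v)).card : ℝ) ≤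
      ∑ c : C, (((W x).filter (fun v => c ∈ U v)).card : ℝ) :=
    Finset.sum_le_sum_of_subset_of_nonneg (subset_univ _) (fun _ _ _ => by positivity)
  simp only [Finset.sum_const, nsmul_eq_mul] at h1 h3
  have hu0 : 0 ≤ u := le_trans (by positivity) (hu x)
  have : ((W x).card : ℝ) * u ≤ d * u := by gcongr
  have h6 : ((zs W Lv U x).card : ℝ) * (m/4) ≤ d * u := by linarith
  by_contra hc
  push Not at hc
  nlinarith

lemma cw_sum (X : Finset V) (W : V → Finset V) (Lv : V → Finset C) (x : V) (c : C) (r : ℕ)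
    (hP : ∀ v, (X.filter (fun x => v ∈ W x)).card ≤ r) :
    ∑ y, cw X W Lv x c y ≤ 4 * r := by
  unfold cw
  rw [← Finset.sum_div, ← Finset.mul_sum]
  apply div_le_of_le_mul₀ (by positivity) (by positivity)
  rw [mul_assoc]
  gcongr
  have : ∑ y, (((W x).filter (fun v => c ∈ Lv v ∧ y ∈ X ∧ v ∈ W y)).card : ℝ) =
      ∑ v ∈ (W x).filter (fun v => c ∈ Lv v), ((X.filter (fun x => v ∈ W x)).card : ℝ) := by
    have hA : ∀ y, (((W x).filter (fun v => c ∈ Lv v ∧ y ∈ X ∧ v ∈ W y)).card : ℝ) =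
        ∑ v ∈ (W x).filter (fun v => c ∈ Lv v), if y ∈ X ∧ v ∈ W y then (1:ℝ) else 0 := by
      intro y
      rw [Finset.sum_boole, Finset.filter_filter]
    simp_rw [hA]
    rw [Finset.sum_comm]
    apply Finset.sum_congr rfl
    intro v _
    rw [Finset.sum_boole]
    congr 2
    ext y; simp
  rw [this]
  refine (Finset.sum_le_sum (fun v _ => (show _ ≤ (r:ℝ) by exact_mod_cast hP v))).trans ?_
  simp only [Finset.sum_const, nsmul_eq_mul]
  linarith

lemma tail_le (q : ℝ) (n r k T : ℕ) (η : ℝ) (hq : 0 ≤ q) (hn : n ≤ r) (h : q * r ≤ k / 4) (hk : T ≤ k)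
    (hT : (2/3 : ℝ) ^ T ≤ η) : (1 + q) ^ n / 2 ^ k ≤ η := by
  refine (tail_num q n k hq ?_).trans (le_trans ?_ hT)
  · refine le_trans ?_ h
    gcongr
  · exact pow_le_pow_of_le_one (by norm_num) (by norm_num) hk

lemma fl_prob (X : Finset V) (W : V → Finset V) (Lv U : V → Finset C) (v : V) (m u η : ℝ) (d r T : ℕ)
    (hm0 : 0 < m) (hm : ∀ x ∈ X, ∀ c, m ≤ ((W x).filter (fun v => c ∈ Lv v)).card)
    (hW : ∀ x, (W x).card ≤ d) (hu : ∀ v, ((U v).card : ℝ) ≤ u)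
    (hZ : 4 * d * u ≤ m * Fintype.card C / 64)
    (hP : ∀ v, (X.filter (fun x => v ∈ W x)).card ≤ r)
    (hr : 256 * r ≤ Fintype.card C) (hT1 : 1 ≤ T) (hrT : 8 * T ≤ r) (hT : (2/3 : ℝ) ^ T ≤ η) :
    pr (fun f : V → C => r / 2 < (X.filter (fun x => v ∈ W x ∧ fl X W Lv U f x)).card) ≤ 3 * η := by
  set P := X.filter (fun x => v ∈ W x) with hPdef
  set k := r / 8 with hk
  have hN : (0:ℝ) < Fintype.card C := by exact_mod_cast Fintype.card_pos
  have hr' : (256:ℝ) * r ≤ Fintype.card C := by exact_mod_cast hr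
  have hk1 : 1 ≤ k := by omega
  have hrk : (r:ℝ) ≤ 15 * k := by
    have : r ≤ 15 * k := by omega
    exact_mod_cast this
  have hTk : T ≤ k := by omega
  let Cf : (V → C) → V → Prop := fun f x => 1 ≤ ∑ y, if y ≠ x ∧ f y = f x then cw X W Lv x (f x) y else 0
  have hrN : (r:ℝ) / Fintype.card C ≤ 1 / 256 := by rw [div_le_iff₀ hN]; linarith
  have e1 : pr (fun f : V → C => k ≤ (P.filter (fun x => f x ∈ zs W Lv U x)).card) ≤ η := by
    refine (pr_tail P (fun K f => ∀ x ∈ K, f x ∈ zs W Lv U x) _ (1/64) k ?_ ?_).trans ?_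
    · intro K hK
      apply pr_pi_le
      intro x hx
      exact zs_card W Lv U x m u d (hm x (mem_filter.1 (hK hx)).1) hm0 (hW x) hu hZ
    · intro f hf
      exact ⟨_, filter_subset _ _, hf, fun K hK x hx => (mem_filter.1 (hK hx)).2⟩
    · exact tail_le _ _ r k T η (by norm_num) (hP v) (by linarith) hTk hT
  have e2 : pr (fun f : V → C => ∃ K₀ ⊆ P, k ≤ K₀.card ∧ ∀ x ∈ K₀, ∃ y ∈ P \ K₀, f y = f x) ≤ η := by
    refine (pr_tail P (fun K f => ∀ x ∈ K, ∃ y ∈ P \ K, f y = f x) _ ((P.card:ℝ) / Fintype.card C) k ?_ ?_).trans ?_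
    · intro K hK
      exact pr_repeat P K
    · rintro f ⟨K₀, h1, h2, h3⟩
      refine ⟨K₀, h1, h2, fun K hK x hx => ?_⟩
      obtain ⟨y, hy, hxy⟩ := h3 x (hK hx)
      exact ⟨y, sdiff_subset_sdiff subset_rfl hK hy, hxy⟩
    · refine tail_le _ _ r k T η (by positivity) (hP v) ?_ hTk hT
      have : (P.card:ℝ) / Fintype.card C ≤ 1/256 := by
        refine le_trans ?_ hrN
        gcongr
        exact hP v
      have hr0 : (0:ℝ) ≤ r := by positivity
      nlinarith
  have e3 : pr (fun f : V → C => ∃ K₀ ⊆ P, k ≤ K₀.card ∧ Set.InjOn f K₀ ∧ ∀ x ∈ K₀, Cf f x) ≤ η := by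
    refine (pr_tail P (fun K f => Set.InjOn f K ∧ ∀ x ∈ K, f x ∈ (univ : Finset C) ∧ Cf f x) _
      ((Fintype.card C) * (4 * r) / (Fintype.card C : ℝ)^2) k ?_ ?_).trans ?_
    · intro K hK
      refine pr_multi K (fun _ => univ) (cw X W Lv) (Fintype.card C) (4 * r) ?_ ?_ (by positivity) ?_
      · intro x c y; unfold cw; positivity
      · intro x _ c _; exact cw_sum X W Lv x c r hP
      · intro x _; simp
    · rintro f ⟨K₀, h1, h2, h3, h4⟩
      exact ⟨K₀, h1, h2, fun K hK => ⟨h3.mono (by exact_mod_cast hK), fun x hx => ⟨mem_univ _, h4 x (hK hx)⟩⟩⟩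
    · refine tail_le _ _ r k T η (by positivity) (hP v) ?_ hTk hT
      have : (Fintype.card C : ℝ) * (4 * r) / (Fintype.card C : ℝ)^2 = 4 * (r / Fintype.card C) := by
        field_simp
      rw [this]
      have hr0 : (0:ℝ) ≤ r := by positivity
      nlinarith
  calc _ ≤ pr (fun f : V → C => (k ≤ (P.filter (fun x => f x ∈ zs W Lv U x)).card ∨
        ∃ K₀ ⊆ P, k ≤ K₀.card ∧ ∀ x ∈ K₀, ∃ y ∈ P \ K₀, f y = f x) ∨
        ∃ K₀ ⊆ P, k ≤ K₀.card ∧ Set.InjOn f K₀ ∧ ∀ x ∈ K₀, Cf f x) := by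
        apply pr_mono
        intro f hf
        by_contra hcon
        push Not at hcon
        obtain ⟨⟨c1, c2⟩, c3⟩ := hcon
        set B := P.filter (Cf f) with hB
        have hcover : X.filter (fun x => v ∈ W x ∧ fl X W Lv U f x) ⊆
            P.filter (fun x => f x ∈ zs W Lv U x) ∪ B := by
          intro x hx
          simp only [mem_filter] at hx
          have := fl_split X W Lv U f x m hm0 (hm x hx.1) hx.2.2
          simp only [mem_union, hB, mem_filter, hPdef]
          tauto
        have h1 := (card_le_card hcover).trans (card_union_le _ _)
        have h2 : 2 * k ≤ B.card := by omega
        obtain ⟨B0, hB0, hinj, himg⟩ : ∃ B0 ⊆ B, Set.InjOn f B0 ∧ B0.image f = B.image f := by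
          obtain ⟨B0, h1, h2, h3⟩ := Finset.exists_subset_injOn_image_eq_of_surjOn (f := f) (B : Set V) (B.image f)
            (by intro c hc; simpa using hc)
          exact ⟨B0, by exact_mod_cast h1, h2, h3⟩
        have hBP : B ⊆ P := filter_subset _ _
        by_cases hc : k ≤ B0.card
        · obtain ⟨x, hx, hx'⟩ := c3 B0 (hB0.trans hBP) hc hinj
          exact hx' (mem_filter.1 (hB0 hx)).2
        · have h3 : (B \ B0).card + B0.card = B.card := card_sdiff_add_card_eq_card hB0
          obtain ⟨x, hx, hx'⟩ := c2 (B \ B0) (sdiff_subset.trans hBP) (by omega)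
          have : f x ∈ B0.image f := by rw [himg]; exact mem_image_of_mem f (mem_sdiff.1 hx).1
          obtain ⟨y, hy, hyx⟩ := mem_image.1 this
          exact hx' y (mem_sdiff.2 ⟨hBP (hB0 hy), fun h => (mem_sdiff.1 h).2 hy⟩) hyx
    _ ≤ _ := by
      have a1 := pr_or (fun f : V → C => (k ≤ (P.filter (fun x => f x ∈ zs W Lv U x)).card ∨
        ∃ K₀ ⊆ P, k ≤ K₀.card ∧ ∀ x ∈ K₀, ∃ y ∈ P \ K₀, f y = f x)) (fun f =>
        ∃ K₀ ⊆ P, k ≤ K₀.card ∧ Set.InjOn f K₀ ∧ ∀ x ∈ K₀, Cf f x)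
      have a2 := pr_or (fun f : V → C => (k ≤ (P.filter (fun x => f x ∈ zs W Lv U x)).card)) (fun f =>
        ∃ K₀ ⊆ P, k ≤ K₀.card ∧ ∀ x ∈ K₀, ∃ y ∈ P \ K₀, f y = f x)
      linarith

end ExtRand

section ExtMain
open Finset
open scoped Classical

variable {V C : Type*} [Fintype V] [Fintype C] [Nonempty C]

lemma ext_rand (nb : V → Finset V) (d : ℕ) (hd : ∀ v, (nb v).card ≤ d)
    (hs : ∀ v w, w ∈ nb v → v ∈ nb w)
    (X : Finset V) (W : V → Finset V) (Lv U : V → Finset C) (m u b t : ℝ) (r T : ℕ)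
    (hWnb : ∀ x, W x ⊆ nb x)
    (hm0 : 0 < m) (hm : ∀ x ∈ X, ∀ c, m ≤ ((W x).filter (fun v => c ∈ Lv v)).card)
    (hu : ∀ v, ((U v).card : ℝ) ≤ u)
    (hZ : 4 * d * u ≤ m * Fintype.card C / 64)
    (hP : ∀ v, (X.filter (fun x => v ∈ W x)).card ≤ r)
    (hb : ∀ v, ((Lv v).card : ℝ) ≤ b) (hbt : b / Fintype.card C * r ≤ t / 4) (ht : 0 ≤ t)
    (hr : 256 * r ≤ Fintype.card C) (hT1 : 1 ≤ T) (hrT : 8 * T ≤ r) (htT : (T : ℝ) ≤ t)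
    (hT : (2/3 : ℝ) ^ T ≤ 1 / (16 * ((d:ℝ)+1)^6)) :
    ∃ f : V → C, ∀ v, (((X.filter (fun x => v ∈ W x ∧ f x ∈ Lv v)).card : ℝ) ≤ t) ∧
      (X.filter (fun x => v ∈ W x ∧ fl X W Lv U f x)).card ≤ r / 2 := by
  have hN : (0:ℝ) < Fintype.card C := by exact_mod_cast Fintype.card_pos
  have key : ∃ f : V → C, ∀ v, ¬ (
    t < ((X.filter (fun x => v ∈ W x ∧ f x ∈ Lv v)).card : ℝ) ∨
    r / 2 < (X.filter (fun x => v ∈ W x ∧ fl X W Lv U f x)).card) := by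
    refine lll_ball nb d hd hs (fun v (f : V → C) =>
      t < ((X.filter (fun x => v ∈ W x ∧ f x ∈ Lv v)).card : ℝ) ∨
      r / 2 < (X.filter (fun x => v ∈ W x ∧ fl X W Lv U f x)).card) ?_ ?_
    · intro v f g hfg
      have h0 : ∀ x, v ∈ W x → x ∈ bl nb 1 v := fun x hx =>
        bl_step nb (n := 0) (by simp [bl]) (hs _ _ (hWnb x hx))
      have h1 : ∀ x, v ∈ W x → f x = g x := fun x hx => hfg x (bl_mono nb (by omega) v (h0 x hx))
      have h2 : ∀ x, v ∈ W x → (fl X W Lv U f x ↔ fl X W Lv U g x) := by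
        intro x hx
        have : gd X W Lv U f x = gd X W Lv U g x := by
          unfold gd
          rw [h1 x hx]
          apply Finset.filter_congr
          intro w hw
          have h3 : ∀ x', w ∈ W x' → f x' = g x' := fun x' hx' =>
            hfg x' (bl_step nb (bl_step nb (h0 x hx) (hWnb x hw)) (hs _ _ (hWnb x' hx')))
          constructor
          · rintro ⟨a, b, c⟩
            exact ⟨a, b, fun x' hx' hw' hne => by rw [← h3 x' hw']; exact c x' hx' hw' hne⟩
          · rintro ⟨a, b, c⟩
            exact ⟨a, b, fun x' hx' hw' hne => by rw [h3 x' hw']; exact c x' hx' hw' hne⟩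
        unfold fl
        rw [this, h1 x hx]
      have e1 : X.filter (fun x => v ∈ W x ∧ f x ∈ Lv v) = X.filter (fun x => v ∈ W x ∧ g x ∈ Lv v) := by
        apply Finset.filter_congr
        intro x _
        exact and_congr_right (fun hx => by rw [h1 x hx])
      have e2 : X.filter (fun x => v ∈ W x ∧ fl X W Lv U f x) = X.filter (fun x => v ∈ W x ∧ fl X W Lv U g x) := by
        apply Finset.filter_congr
        intro x _
        exact and_congr_right (fun hx => h2 x hx)
      rw [e1, e2]
      exact id
    · intro v
      refine (pr_or _ _).trans ?_
      have a1 := fl_prob X W Lv U v m u _ d r T hm0 hm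
        (fun x => (card_le_card (hWnb x)).trans (hd x)) hu hZ hP hr hT1 hrT hT
      have a2 : pr (fun f : V → C => t < ((X.filter (fun x => v ∈ W x ∧ f x ∈ Lv v)).card : ℝ)) ≤
          1 / (16 * ((d:ℝ)+1)^6) := by
        refine (pr_tail (X.filter (fun x => v ∈ W x)) (fun K f => ∀ x ∈ K, f x ∈ Lv v) _
          (b / Fintype.card C) (⌊t⌋₊+1) ?_ ?_).trans ?_
        · intro K _
          apply pr_pi_le
          intro x _
          gcongr
          exact hb v
        · intro f hf
          refine ⟨X.filter (fun x => v ∈ W x ∧ f x ∈ Lv v), ?_, ?_, fun K hK x hx => (mem_filter.1 (hK hx)).2.2⟩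
          · intro x hx
            simp only [mem_filter] at hx ⊢
            tauto
          · have := (Nat.floor_lt ht).2 hf
            omega
        · have hb0 : 0 ≤ b := le_trans (by positivity) (hb v)
          refine tail_le _ _ r _ T _ (by positivity) (hP v) ?_ ?_ hT
          · have := (Nat.lt_floor_add_one t).le
            push_cast
            linarith
          · have := Nat.le_floor htT
            omega
      have : (1:ℝ) / (4 * ((d:ℝ)+1)^6) = 4 * (1 / (16 * ((d:ℝ)+1)^6)) := by field_simp; norm_num
      rw [this]
      linarith
  obtain ⟨f, hf⟩ := key
  refine ⟨f, fun v => ?_⟩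
  have := hf v
  push Not at this
  exact this

lemma quad_pow (i : ℕ) : (i+2)*(i+3) ≤ 6 * 2^i := by
  induction i with
  | zero => norm_num
  | succ i ih => rw [pow_succ]; nlinarith

/-- κ = 2^{-13} -/
theorem ext_main (nb : V → Finset V) (d : ℕ) (hd : ∀ v, (nb v).card ≤ d)
    (hs : ∀ v w, w ∈ nb v → v ∈ nb w)
    (W : V → Finset V) (Lv : V → Finset C) (δ α β : ℝ) (T : ℕ)
    (hWnb : ∀ x, W x ⊆ nb x) (hδ : 0 < δ) (hα : 256 ≤ α) (hβ0 : 0 ≤ β) (hαβ : 24 * 2^13 * β ≤ α) (hd0 : 0 < d)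
    (hN : (Fintype.card C : ℝ) = α * d)
    (hb : ∀ v, ((Lv v).card : ℝ) ≤ β * δ) (hT1 : 1 ≤ T)
    (hT : (2/3 : ℝ) ^ T ≤ 1 / (16 * ((d:ℝ)+1)^6))
    (hTi : ∀ i : ℕ, 2^i ≤ d → (T:ℝ) ≤ δ / 2^13 / ((i+2)*(i+3)))
    (r : ℕ) : ∀ (i : ℕ) (X : Finset V) (U : V → Finset C), r * 2^i ≤ d →
    (∀ x ∈ X, ∀ c, δ/(2*α) ≤ ((W x).filter (fun v => c ∈ Lv v)).card) →
    (∀ v, ((U v).card : ℝ) ≤ δ / 2^13 * (1 - 1/(i+2))) →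
    (∀ v, (X.filter (fun x => v ∈ W x)).card ≤ r) →
    ExtGoal X W Lv U (δ/(2*α)/2) := by
  induction r using Nat.strong_induction_on with
  | _ r ih =>
  intro i X U hri hm hU hP
  have hd' : (0:ℝ) < d := by exact_mod_cast hd0
  have hi : (0:ℝ) ≤ i := by positivity
  have hi2 : (0:ℝ) < 1/((i:ℝ)+2) := by positivity
  have hα0 : 0 < α := by linarith
  have hU' : ∀ v, ((U v).card : ℝ) ≤ δ / 2^13 := by
    intro v
    refine (hU v).trans ?_
    have : 0 < δ / 2^13 := by positivity
    nlinarith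
  by_cases hr : (r:ℝ) ≤ δ / 8
  · refine ext_base W Lv _ (δ/4) d ?_ (by positivity) X U ?_ hm ?_
    · rw [hN]
      apply le_of_eq
      field_simp
      norm_num
    · intro x _
      exact (card_le_card (hWnb x)).trans (hd x)
    · intro v
      have h1 : (((X.filter (fun x => v ∈ W x)).card : ℕ) : ℝ) ≤ r := by exact_mod_cast hP v
      have := hU' v
      norm_num at this ⊢
      linarith
  · push Not at hr
    have hr0 : 0 < r := by
      rcases Nat.eq_zero_or_pos r with h | h
      · subst h; norm_num at hr; linarith
      · exact h
    have h2i : 2^i ≤ d := le_trans (Nat.le_mul_of_pos_left _ hr0) hri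
    have hrd : r ≤ d := le_trans (Nat.le_mul_of_pos_right _ (by positivity)) hri
    have hrd' : (r:ℝ) ≤ d := by exact_mod_cast hrd
    have hri' : (r:ℝ) * 2^i ≤ d := by exact_mod_cast hri
    have hT0 := hTi 0 (by rw [pow_zero]; exact hd0)
    have key : ∃ f : V → C, ∀ v, (((X.filter (fun x => v ∈ W x ∧ f x ∈ Lv v)).card : ℝ) ≤
        (δ / 2^13 / ((i+2)*(i+3)))) ∧
        (X.filter (fun x => v ∈ W x ∧ fl X W Lv U f x)).card ≤ r / 2 := by
      refine ext_rand nb d hd hs X W Lv U (δ/(2*α)) (δ/2^13) (β * δ)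
        (δ / 2^13 / ((i+2)*(i+3))) r T hWnb (by positivity) hm hU' ?_ hP hb ?_ (by positivity) ?_ hT1 ?_
        (hTi i h2i) hT
      · rw [hN]
        have : δ/(2*α) * (α*d) / 64 = δ * d / 128 := by field_simp; norm_num
        rw [this]
        have : 0 < d * δ := by positivity
        norm_num
        nlinarith
      · rw [hN]
        have hq : ((i:ℝ)+2)*(i+3) ≤ 6 * 2^i := by exact_mod_cast quad_pow i
        rw [div_mul_eq_mul_div, div_div, div_div, div_le_div_iff₀ (by positivity) (by positivity)]
        calc β * δ * r * (2^13 * ((i+2)*(i+3) * 4)) ≤ β * δ * r * (2^13 * (6*2^i * 4)) := by gcongr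
          _ = (24 * 2^13 * β) * δ * (r * 2^i) := by ring
          _ ≤ α * δ * d := by gcongr
          _ = _ := by ring
      · have : (256:ℝ) * r ≤ Fintype.card C := by
          rw [hN]
          gcongr
        exact_mod_cast this
      · have : (8:ℝ) * T ≤ r := by
          norm_num at hT0
          linarith
        exact_mod_cast this
    obtain ⟨f, hf⟩ := key
    refine ext_step X W Lv U _ f hm (ih (r/2) (by omega) (i+1) _ _ ?_ ?_ ?_ ?_)
    · rw [pow_succ]
      have := Nat.div_mul_le_self r 2
      calc r / 2 * (2^i*2) = (r/2*2) * 2^i := by ring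
        _ ≤ r * 2^i := by gcongr
        _ ≤ d := hri
    · intro x hx c
      exact hm x (mem_filter.1 hx).1 c
    · intro v
      have h1 : ((U v ∪ (X.filter (fun x => v ∈ W x ∧ f x ∈ Lv v)).image f).card : ℝ) ≤
          (U v).card + (X.filter (fun x => v ∈ W x ∧ f x ∈ Lv v)).card := by
        exact_mod_cast (card_union_le _ _).trans (Nat.add_le_add_left card_image_le _)
      have h2 := (hf v).1
      have h3 := hU v
      refine (h1.trans (add_le_add h3 h2)).trans (le_of_eq ?_)
      push_cast
      field_simp
      ring
    · intro v
      refine le_trans (le_of_eq ?_) (hf v).2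
      rw [Finset.filter_filter]
      congr 1
      apply Finset.filter_congr
      intro x _
      exact and_comm

end ExtMain

section Core
open Finset
open scoped Classical

variable {V C : Type*} [Fintype V] [Fintype C] [Nonempty C]

noncomputable def bd (nb : V → Finset V) (χ : V → C) (v : V) : Finset V :=
  (nb v).filter (fun u => ∃ v' ∈ nb u, v' ≠ v ∧ χ v' = χ v)

def bx (nb : V → Finset V) (d : ℕ) (χ : V → C) (v : V) : Prop := d < 8 * (bd nb χ v).card

noncomputable def mm (nb : V → Finset V) (d : ℕ) (χ : V → C) (v : V) : Finset V :=
  if bx nb d χ v then nb v else nb v \ bd nb χ v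

lemma mm_sub (nb : V → Finset V) (d : ℕ) (χ : V → C) (v : V) : mm nb d χ v ⊆ nb v := by
  unfold mm; split_ifs
  · exact subset_rfl
  · exact sdiff_subset

lemma mm_card (nb : V → Finset V) (d : ℕ) (hd : ∀ v, (nb v).card = d) (χ : V → C) (v : V) :
    7 * d ≤ 8 * (mm nb d χ v).card := by
  unfold mm; split_ifs with h
  · rw [hd]; omega
  · unfold bx at h
    have : (nb v \ bd nb χ v).card + (bd nb χ v).card = (nb v).card :=
      card_sdiff_add_card_eq_card (filter_subset _ _)
    rw [hd] at this
    omega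

lemma bd_congr (nb : V → Finset V) {χ χ' : V → C} {v : V} (h0 : χ v = χ' v)
    (h : ∀ u ∈ nb v, ∀ v' ∈ nb u, χ v' = χ' v') : bd nb χ v = bd nb χ' v := by
  unfold bd
  apply Finset.filter_congr
  intro u hu
  constructor
  · rintro ⟨v', a, b, c⟩
    exact ⟨v', a, b, by rw [← h u hu v' a, ← h0, c]⟩
  · rintro ⟨v', a, b, c⟩
    exact ⟨v', a, b, by rw [h u hu v' a, h0, c]⟩

lemma coupon (M : Finset V) (S : Finset C) (m' : ℝ) (hm' : 0 ≤ m') :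
    pr (fun h : V → C => ((S.filter (fun a => a ∈ M.image h)).card : ℝ) ≤ m') ≤
      (1 + Real.exp (-(M.card / Fintype.card C))) ^ S.card / 2 ^ (S.card - ⌊m'⌋₊) := by
  have hN : (0:ℝ) < Fintype.card C := by exact_mod_cast Fintype.card_pos
  apply pr_tail S (fun K h => ∀ u ∈ M, h u ∈ (univ \ K : Finset C))
  · intro K _
    refine (pr_pi_le M (fun _ => univ \ K) (Real.exp (-(K.card / Fintype.card C))) ?_).trans (le_of_eq ?_)
    · intro x _
      rw [← Finset.compl_eq_univ_sdiff, Finset.card_compl, Nat.cast_sub (card_le_univ K), sub_div,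
        div_self hN.ne']
      linarith [Real.add_one_le_exp (-((K.card:ℝ) / Fintype.card C))]
    · rw [← Real.exp_nat_mul, ← Real.exp_nat_mul]
      congr 1; ring
  · intro h hh
    refine ⟨S.filter (fun a => ¬ a ∈ M.image h), filter_subset _ _, ?_, ?_⟩
    · have h1 := Finset.card_filter_add_card_filter_not (s := S) (fun a => a ∈ M.image h)
      have h2 := Nat.le_floor hh
      omega
    · intro K hK u hu
      simp only [mem_sdiff, mem_univ, true_and]
      intro hc
      exact (mem_filter.1 (hK hc)).2 (mem_image_of_mem h hu)

lemma coupon_num (z α δ : ℝ) (n T : ℕ) (hα : 256 ≤ α) (hδ : 0 < δ) (hz : 7/(8*α) ≤ z) (hn : δ ≤ n)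
    (hT : (T:ℝ) ≤ δ/(16*α)) :
    (1 + Real.exp (-z)) ^ n / 2 ^ (n - ⌊9*δ/(16*α)⌋₊) ≤ (2/3:ℝ)^T := by
  have hα0 : 0 < α := by linarith
  set x := δ/α with hx
  have hx0 : 0 < x := by positivity
  set k := ⌊9*δ/(16*α)⌋₊ with hk
  have hkle : (k:ℝ) ≤ 9/16*x := by
    have := Nat.floor_le (show 0 ≤ 9*δ/(16*α) by positivity)
    rw [hx]
    refine this.trans (le_of_eq ?_)
    ring
  have h1 : (1:ℝ) / 2^(n-k) ≤ 2^k/2^n := by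
    rw [div_le_div_iff₀ (by positivity) (by positivity), one_mul, ← pow_add]
    apply pow_le_pow_right₀ (by norm_num)
    omega
  have h2 : (1 + Real.exp (-z))/2 ≤ Real.exp (-(0.43/α)) := by
    set w := 7/(8*α) with hw
    have hw0 : 0 < w := by positivity
    have hw1 : w ≤ 1/256 := by
      rw [hw, div_le_div_iff₀ (by positivity) (by positivity)]; linarith
    have a1 : Real.exp (-z) ≤ Real.exp (-w) := Real.exp_le_exp.2 (by linarith)
    have a2 : Real.exp (-w) ≤ 1/(1+w) := by
      rw [Real.exp_neg, ← one_div]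
      apply one_div_le_one_div_of_le (by positivity)
      linarith [Real.add_one_le_exp w]
    have a3 : 1/(1+w) ≤ 1 - 2*(0.43/α) := by
      have : 0.43/α = (0.43*8/7) * w := by rw [hw]; field_simp
      rw [this, div_le_iff₀ (by positivity)]
      nlinarith
    linarith [Real.add_one_le_exp (-(0.43/α))]
  have h3 : (2:ℝ)^k ≤ Real.exp (0.39*x) := by
    have b1 : (2:ℝ) = Real.exp (Real.log 2) := (Real.exp_log (by norm_num)).symm
    rw [b1, ← Real.exp_nat_mul]
    apply Real.exp_le_exp.2
    have := Real.log_two_lt_d9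
    have hl : 0 < Real.log 2 := Real.log_pos (by norm_num)
    nlinarith
  have h4 : ((1 + Real.exp (-z))/2)^n ≤ Real.exp (-(0.43*x)) := by
    calc _ ≤ (Real.exp (-(0.43/α)))^n := by gcongr
      _ = Real.exp (-(0.43/α) * n) := by rw [← Real.exp_nat_mul]; congr 1; ring
      _ ≤ _ := by
        apply Real.exp_le_exp.2
        have : 0.43/α*δ ≤ 0.43/α*n := by gcongr
        have e : 0.43/α*δ = 0.43*x := by rw [hx]; ring
        linarith
  have h5 : Real.exp (-(0.04*x)) ≤ (2/3:ℝ)^T := by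
    have c1 : Real.exp (-(1/2)) ≤ 2/3 := by
      rw [Real.exp_neg, inv_le_comm₀ (Real.exp_pos _) (by norm_num)]
      have := Real.add_one_le_exp (1/2:ℝ)
      norm_num at this ⊢
      linarith
    calc _ ≤ Real.exp (T * (-(1/2))) := by
          apply Real.exp_le_exp.2
          have e : δ/(16*α) = x/16 := by rw [hx]; field_simp
          rw [e] at hT
          linarith
      _ = (Real.exp (-(1/2)))^T := by rw [Real.exp_nat_mul]
      _ ≤ _ := by gcongr
  calc _ = (1 + Real.exp (-z)) ^ n * (1 / 2 ^ (n - k)) := by rw [mul_one_div]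
    _ ≤ (1 + Real.exp (-z)) ^ n * (2^k/2^n) := by gcongr
    _ = 2^k * ((1 + Real.exp (-z))/2)^n := by rw [div_pow]; ring
    _ ≤ Real.exp (0.39*x) * Real.exp (-(0.43*x)) := by gcongr
    _ = Real.exp (-(0.04*x)) := by rw [← Real.exp_add]; congr 1; ring
    _ ≤ _ := h5

lemma c1_prob (nb : V → Finset V) (d : ℕ) (hd : ∀ v, (nb v).card = d) (hd0 : 0 < d)
    (tf : ∀ v u w, u ∈ nb v → w ∈ nb u → w ∉ nb v) (v : V) (S : Finset C) (α δ : ℝ) (T : ℕ)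
    (hα : 256 ≤ α) (hδ : 0 < δ) (hN : (Fintype.card C : ℝ) = α * d) (hS : δ ≤ S.card)
    (hT : (T:ℝ) ≤ δ/(16*α)) :
    pr (fun χ : V → C => ((S.filter (fun a => a ∈ (mm nb d χ v).image χ)).card : ℝ) ≤ 9*δ/(16*α)) ≤
      (2/3:ℝ)^T := by
  have hd' : (0:ℝ) < d := by exact_mod_cast hd0
  have hα0 : 0 < α := by linarith
  apply pr_cond (nb v)
  intro f
  have hv : v ∉ nb v := fun h => tf v v v h h h
  have hmm : ∀ h, mm nb d (mrg (nb v) f h) v = mm nb d f v := by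
    intro h
    have : bd nb (mrg (nb v) f h) v = bd nb f v := by
      apply bd_congr
      · exact mrg_not hv
      · intro u hu v' hv'
        exact mrg_not (tf v u v' hu hv')
    unfold mm bx
    rw [this]
  have himg : ∀ h, (mm nb d f v).image (mrg (nb v) f h) = (mm nb d f v).image h := by
    intro h
    apply Finset.image_congr
    intro u hu
    exact mrg_mem (mm_sub nb d f v hu)
  simp only [hmm, himg]
  refine (coupon (mm nb d f v) S _ (by positivity)).trans ?_
  apply coupon_num _ α δ _ T hα hδ _ hS hT
  rw [hN, div_le_div_iff₀ (by positivity) (by positivity)]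
  have : (7:ℝ) * d ≤ 8 * (mm nb d f v).card := by exact_mod_cast mm_card nb d hd f v
  nlinarith

lemma c2_prob (nb : V → Finset V) (d : ℕ) (hd : ∀ v, (nb v).card = d) (hd0 : 0 < d)
    (v : V) (S : Finset C) (α β δ : ℝ) (T : ℕ)
    (hα : 256 ≤ α) (hβ : 0 ≤ β) (hαβ : 512 * β ≤ α) (hδ : 0 < δ) (hN : (Fintype.card C : ℝ) = α * d)
    (hS : (S.card : ℝ) ≤ β * δ)
    (hT : (T:ℝ) ≤ δ/(16*α)) :
    pr (fun χ : V → C => δ/(16*α) <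
      ((S.filter (fun a => a ∈ ((nb v).filter (bx nb d χ)).image χ)).card : ℝ)) ≤
      (2/3:ℝ)^T := by
  have hd' : (0:ℝ) < d := by exact_mod_cast hd0
  have hα0 : 0 < α := by linarith
  let ω : V → C → V → ℝ := fun x _ y => 8 * (((nb x).filter (fun u => y ∈ nb u)).card : ℝ) / d
  have hωs : ∀ x c, ∑ y, ω x c y ≤ 8 * d := by
    intro x c
    simp only [ω]
    rw [← Finset.sum_div, ← Finset.mul_sum]
    have : ∑ y, (((nb x).filter (fun u => y ∈ nb u)).card : ℝ) = d * d := by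
      simp_rw [← Finset.sum_boole]
      rw [Finset.sum_comm]
      simp [hd]
    rw [this]
    apply le_of_eq
    field_simp
  have hbx : ∀ (χ : V → C) x, bx nb d χ x → 1 ≤ ∑ y, if y ≠ x ∧ χ y = χ x then ω x (χ x) y else 0 := by
    intro χ x hx
    rw [← Finset.sum_filter]
    simp only [ω]
    rw [← Finset.sum_div, ← Finset.mul_sum, le_div_iff₀ hd', one_mul]
    have h1 : (bd nb χ x).card ≤ ∑ y ∈ univ.filter (fun y => y ≠ x ∧ χ y = χ x),
        ((nb x).filter (fun u => y ∈ nb u)).card := by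
      refine le_trans (card_le_card ?_) card_biUnion_le
      intro u hu
      simp only [bd, mem_filter] at hu
      obtain ⟨hu, v', a, b, c⟩ := hu
      simp only [mem_biUnion, mem_filter, mem_univ, true_and]
      exact ⟨v', ⟨b, c⟩, hu, a⟩
    have h2 : ((bd nb χ x).card : ℝ) ≤ ∑ y ∈ univ.filter (fun y => y ≠ x ∧ χ y = χ x),
        (((nb x).filter (fun u => y ∈ nb u)).card : ℝ) := by exact_mod_cast h1
    have h3 : (d:ℝ) < 8 * (bd nb χ x).card := by exact_mod_cast hx
    linarith
  refine (pr_tail (nb v) (fun K χ => Set.InjOn χ K ∧ ∀ x ∈ K, χ x ∈ S ∧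
      1 ≤ ∑ y, if y ≠ x ∧ χ y = χ x then ω x (χ x) y else 0) _
      (β * δ * (8 * d) / (Fintype.card C : ℝ)^2) (⌊δ/(16*α)⌋₊+1) ?_ ?_).trans ?_
  · intro K _
    refine pr_multi K (fun _ => S) ω (β * δ) (8 * d) ?_ ?_ (by positivity) ?_
    · intro x c y; simp only [ω]; positivity
    · intro x _ c _; exact hωs x c
    · intro x _; exact hS
  · intro χ hχ
    set Y := (nb v).filter (bx nb d χ) with hY
    obtain ⟨K, h1, h2, h3⟩ := Finset.exists_subset_injOn_image_eq_of_surjOn (f := χ) (Y : Set V)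
      (S.filter (fun a => a ∈ Y.image χ)) (by
        intro a ha
        have := (mem_filter.1 (by exact_mod_cast ha)).2
        simpa using this)
    have h1' : K ⊆ Y := by exact_mod_cast h1
    refine ⟨K, h1'.trans (filter_subset _ _), ?_, ?_⟩
    · rw [← h3, Finset.card_image_of_injOn h2] at hχ
      have := (Nat.floor_lt (by positivity)).2 hχ
      omega
    · intro K' hK'
      refine ⟨h2.mono (by exact_mod_cast hK'), fun x hx => ⟨?_, ?_⟩⟩
      · have : χ x ∈ K.image χ := mem_image_of_mem _ (hK' hx)
        rw [h3] at this
        exact (mem_filter.1 this).1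
      · exact hbx χ x (mem_filter.1 (h1' (hK' hx))).2
  · refine tail_le _ _ d _ T _ (by positivity) (hd v).le ?_ ?_ le_rfl
    · have e : β * δ * (8 * d) / (Fintype.card C : ℝ)^2 * d = 8 * β * δ / α^2 := by
        rw [hN]; field_simp
      rw [e]
      have h1 : 8 * β * δ / α^2 ≤ δ/(16*α)/4 := by
        rw [div_div, div_le_div_iff₀ (by positivity) (by positivity)]
        have : 512 * β * (δ * α) ≤ α * (δ * α) := by gcongr
        nlinarith
      have := (Nat.lt_floor_add_one (δ/(16*α))).le
      push_cast
      linarith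
    · have := Nat.le_floor hT
      omega

lemma c3_prob (nb : V → Finset V) (d : ℕ) (hd : ∀ v, (nb v).card = d) (hd0 : 0 < d)
    (v : V) (S : Finset C) (α β δ : ℝ) (T : ℕ)
    (hα : 256 ≤ α) (hβ : 0 ≤ β) (hαβ : 2^16 * β ≤ α) (hδ : 0 < δ) (hN : (Fintype.card C : ℝ) = α * d)
    (hS : (S.card : ℝ) ≤ β * δ)
    (hT : (T:ℝ) ≤ δ/2^14) :
    pr (fun χ : V → C => δ/2^14 < (((nb v).filter (fun u => χ u ∈ S)).card : ℝ)) ≤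
      (2/3:ℝ)^T := by
  have hd' : (0:ℝ) < d := by exact_mod_cast hd0
  have hα0 : 0 < α := by linarith
  refine (pr_tail (nb v) (fun K χ => ∀ x ∈ K, χ x ∈ S) _
      (β * δ / (Fintype.card C : ℝ)) (⌊δ/2^14⌋₊+1) ?_ ?_).trans ?_
  · intro K _
    apply pr_pi_le
    intro x _
    gcongr
  · intro χ hχ
    refine ⟨_, filter_subset _ _, ?_, fun K hK x hx => (mem_filter.1 (hK hx)).2⟩
    have := (Nat.floor_lt (by positivity)).2 hχ
    omega
  · refine tail_le _ _ d _ T _ (by positivity) (hd v).le ?_ ?_ le_rfl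
    · have e : β * δ / (Fintype.card C : ℝ) * d = β * δ / α := by
        rw [hN]; field_simp
      rw [e]
      have h1 : β * δ / α ≤ δ/2^14/4 := by
        rw [div_div, div_le_div_iff₀ (by positivity) (by positivity)]
        have : 2^16 * β * δ ≤ α * δ := by gcongr
        nlinarith
      have := (Nat.lt_floor_add_one (δ/2^14)).le
      push_cast
      linarith
    · have := Nat.le_floor hT
      omega

theorem core (nb : V → Finset V) (d : ℕ) (hd : ∀ v, (nb v).card = d) (hd0 : 0 < d)
    (hs : ∀ v w, w ∈ nb v → v ∈ nb w)
    (tf : ∀ v u w, u ∈ nb v → w ∈ nb u → w ∉ nb v) (L : C → Finset C) (α β δ : ℝ) (T : ℕ)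
    (hα : 256 ≤ α) (hβ : 0 ≤ β) (hαβ : 2^16 * β ≤ α) (hδ : 0 < δ) (hN : (Fintype.card C : ℝ) = α * d)
    (hL : ∀ c, δ ≤ (L c).card) (hL' : ∀ c, ((L c).card : ℝ) ≤ β * δ)
    (hT : (T:ℝ) ≤ δ/(16*α)) (hT2 : (T:ℝ) ≤ δ/2^14)
    (hη : (2/3:ℝ)^T ≤ 1 / (16 * ((d:ℝ)+1)^6 * (α * d))) :
    ∃ χ : V → C, ∀ v c,
      9*δ/(16*α) < (((L c).filter (fun a => a ∈ (mm nb d χ v).image χ)).card : ℝ) ∧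
      (((L c).filter (fun a => a ∈ ((nb v).filter (bx nb d χ)).image χ)).card : ℝ) ≤ δ/(16*α) ∧
      (((nb v).filter (fun u => χ u ∈ L c)).card : ℝ) ≤ δ/2^14 := by
  have hd' : (0:ℝ) < d := by exact_mod_cast hd0
  have hα0 : 0 < α := by linarith
  let E : V → C → (V → C) → Prop := fun v c χ =>
    ((((L c).filter (fun a => a ∈ (mm nb d χ v).image χ)).card : ℝ) ≤ 9*δ/(16*α) ∨
      δ/(16*α) < (((L c).filter (fun a => a ∈ ((nb v).filter (bx nb d χ)).image χ)).card : ℝ)) ∨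
      δ/2^14 < (((nb v).filter (fun u => χ u ∈ L c)).card : ℝ)
  have key : ∃ χ : V → C, ∀ v, ¬ (∃ c ∈ (univ : Finset C), E v c χ) := by
    refine lll_ball nb d (fun v => (hd v).le) hs (fun v χ => ∃ c ∈ (univ : Finset C), E v c χ) ?_ ?_
    · intro v f g hfg
      have hv0 : v ∈ bl nb 0 v := by simp [bl]
      have h0 : f v = g v := hfg v (bl_mono nb (by omega) v hv0)
      have h1 : ∀ u ∈ nb v, f u = g u := fun u hu => hfg u (bl_mono nb (by omega) v (bl_step nb hv0 hu))
      have hb0 : bd nb f v = bd nb g v := bd_congr nb h0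
        (fun u hu w hw => hfg w (bl_mono nb (by omega) v (bl_step nb (bl_step nb hv0 hu) hw)))
      have hb1 : ∀ x ∈ nb v, bd nb f x = bd nb g x := fun x hx => bd_congr nb (h1 x hx)
        (fun u hu w hw => hfg w (bl_step nb (bl_step nb (bl_step nb hv0 hx) hu) hw))
      have e1 : mm nb d f v = mm nb d g v := by unfold mm bx; rw [hb0]
      have e2 : (mm nb d g v).image f = (mm nb d g v).image g :=
        Finset.image_congr (fun u hu => h1 u (mm_sub nb d g v hu))
      have e3 : (nb v).filter (bx nb d f) = (nb v).filter (bx nb d g) := by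
        apply Finset.filter_congr
        intro x hx
        unfold bx
        rw [hb1 x hx]
      have e4 : ((nb v).filter (bx nb d g)).image f = ((nb v).filter (bx nb d g)).image g :=
        Finset.image_congr (fun u hu => h1 u (mem_filter.1 (by exact_mod_cast hu)).1)
      have e5 : ∀ c, (nb v).filter (fun u => f u ∈ L c) = (nb v).filter (fun u => g u ∈ L c) := by
        intro c
        apply Finset.filter_congr
        intro x hx
        rw [h1 x hx]
      simp only [E, e1, e2, e3, e4, e5]
      exact id
    · intro v
      refine (pr_exists _ _).trans ?_
      have hc : ∀ c ∈ (univ : Finset C), pr (E v c) ≤ 3 * (2/3:ℝ)^T := by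
        intro c _
        have a1 := c1_prob nb d hd hd0 tf v (L c) α δ T hα hδ hN (hL c) hT
        have a2 := c2_prob nb d hd hd0 v (L c) α β δ T hα hβ (by linarith) hδ hN (hL' c) hT
        have a3 := c3_prob nb d hd hd0 v (L c) α β δ T hα hβ hαβ hδ hN (hL' c) hT2
        have b1 := pr_or (fun χ : V → C => (((L c).filter (fun a => a ∈ (mm nb d χ v).image χ)).card : ℝ) ≤ 9*δ/(16*α) ∨
          δ/(16*α) < (((L c).filter (fun a => a ∈ ((nb v).filter (bx nb d χ)).image χ)).card : ℝ))
          (fun χ => δ/2^14 < (((nb v).filter (fun u => χ u ∈ L c)).card : ℝ))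
        have b2 := pr_or (fun χ : V → C => (((L c).filter (fun a => a ∈ (mm nb d χ v).image χ)).card : ℝ) ≤ 9*δ/(16*α))
          (fun χ => δ/(16*α) < (((L c).filter (fun a => a ∈ ((nb v).filter (bx nb d χ)).image χ)).card : ℝ))
        simp only [E]
        linarith
      refine (Finset.sum_le_sum hc).trans ?_
      rw [Finset.sum_const, Finset.card_univ, nsmul_eq_mul, hN]
      calc α * d * (3 * (2/3:ℝ)^T) ≤ α * d * (3 * (1 / (16 * ((d:ℝ)+1)^6 * (α * d)))) := by gcongr
        _ = 3/16 * (1/((d:ℝ)+1)^6) := by field_simp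
        _ ≤ 1/4 * (1/((d:ℝ)+1)^6) := mul_le_mul_of_nonneg_right (by norm_num) (by positivity)
        _ = _ := by field_simp
  obtain ⟨χ, hχ⟩ := key
  refine ⟨χ, fun v c => ?_⟩
  have := hχ v
  push Not at this
  have := this c (mem_univ c)
  simp only [E] at this
  push Not at this
  exact ⟨this.1.1, this.1.2, this.2⟩

end Core

section Assembly
open Finset
open scoped Classical

variable {V C : Type*} [Fintype V] [Fintype C] [Nonempty C]

theorem assemble (G : SimpleGraph V) (𝒢 : SimpleGraph C) (nb : V → Finset V) (L : C → Finset C)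
    (hnb : ∀ v u, u ∈ nb v ↔ G.Adj v u) (hLa : ∀ c a, a ∈ L c ↔ 𝒢.Adj c a)
    (d : ℕ) (hd : ∀ v, (nb v).card = d) (hd0 : 0 < d)
    (tf : ∀ v u w, u ∈ nb v → w ∈ nb u → w ∉ nb v) (α β δ : ℝ) (T : ℕ)
    (hα : 256 ≤ α) (hβ : 0 ≤ β) (hαβ : 24 * 2^13 * β ≤ α) (hδ : 0 < δ)
    (hN : (Fintype.card C : ℝ) = α * d)
    (hL : ∀ c, δ ≤ (L c).card) (hL' : ∀ c, ((L c).card : ℝ) ≤ β * δ) (hT1 : 1 ≤ T)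
    (hT : (T:ℝ) ≤ δ/(16*α)) (hT2 : (T:ℝ) ≤ δ/2^14)
    (hη : (2/3:ℝ)^T ≤ 1 / (16 * ((d:ℝ)+1)^6 * (α * d)))
    (hTi : ∀ i : ℕ, 2^i ≤ d → (T:ℝ) ≤ δ / 2^13 / ((i+2)*(i+3))) :
    ∃ (H : SimpleGraph V) (χ : V → C), H ≤ G ∧
      (∀ v, ∃ S : Finset V, (∀ u ∈ S, H.Adj v u) ∧ δ / (4 * α) ≤ S.card) ∧
      (∀ v, Set.InjOn χ (H.neighborSet v)) ∧
      (∀ u v, H.Adj u v → 𝒢.Adj (χ u) (χ v)) := by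
  have hd' : (0:ℝ) < d := by exact_mod_cast hd0
  have hd1 : (1:ℝ) ≤ d := by exact_mod_cast hd0
  have hα0 : 0 < α := by linarith
  have hs : ∀ v w, w ∈ nb v → v ∈ nb w := fun v w h => (hnb w v).2 ((hnb v w).1 h).symm
  have hLs : ∀ a c, a ∈ L c → c ∈ L a := fun a c h => (hLa a c).2 ((hLa c a).1 h).symm
  obtain ⟨χ, hχ⟩ := core nb d hd hd0 hs tf L α β δ T hα hβ (by linarith) hδ hN hL hL' hT hT2 hη
  have hrep : ∀ v a, ∃ u, (a ∈ (nb v).image χ → u ∈ nb v ∧ χ u = a ∧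
      (a ∈ (mm nb d χ v).image χ → u ∈ mm nb d χ v)) := by
    intro v a
    by_cases h1 : a ∈ (mm nb d χ v).image χ
    · obtain ⟨u, hu, hua⟩ := mem_image.1 h1
      exact ⟨u, fun _ => ⟨mm_sub nb d χ v hu, hua, fun _ => hu⟩⟩
    · by_cases h2 : a ∈ (nb v).image χ
      · obtain ⟨u, hu, hua⟩ := mem_image.1 h2
        exact ⟨u, fun _ => ⟨hu, hua, fun h => absurd h h1⟩⟩
      · exact ⟨v, fun h => absurd h h2⟩
  choose rep hrep using hrep
  set W : V → Finset V := fun v =>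
    ((nb v).image χ \ ((nb v).filter (bx nb d χ)).image χ).image (rep v) with hW
  have memW : ∀ v u, u ∈ W v → u ∈ nb v ∧ ¬ bx nb d χ u ∧ u = rep v (χ u) := by
    intro v u hu
    simp only [hW] at hu
    obtain ⟨a, ha, rfl⟩ := mem_image.1 hu
    obtain ⟨ha1, ha2⟩ := mem_sdiff.1 ha
    obtain ⟨h1, h2, h3⟩ := hrep v a ha1
    refine ⟨h1, fun hb => ha2 ?_, by rw [h2]⟩
    exact mem_image.2 ⟨_, mem_filter.2 ⟨h1, hb⟩, h2⟩
  have injW : ∀ v u u', u ∈ W v → u' ∈ W v → χ u = χ u' → u = u' := by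
    intro v u u' hu hu' h
    rw [(memW v u hu).2.2, (memW v u' hu').2.2, h]
  have W4 : ∀ v c, δ/(2*α) ≤ (((W v).filter (fun u => u ∈ mm nb d χ v ∧ χ u ∈ L c)).card : ℝ) := by
    intro v c
    obtain ⟨h1, h2, _⟩ := hχ v c
    set A1 := (L c).filter (fun a => a ∈ (mm nb d χ v).image χ)
    set A2 := (L c).filter (fun a => a ∈ ((nb v).filter (bx nb d χ)).image χ)
    have hA : ∀ a ∈ A1 \ A2, a ∈ (nb v).image χ ∧ a ∈ (mm nb d χ v).image χ ∧
        a ∉ ((nb v).filter (bx nb d χ)).image χ ∧ a ∈ L c := by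
      intro a ha
      obtain ⟨ha1, ha2⟩ := mem_sdiff.1 ha
      obtain ⟨p1, p2⟩ := mem_filter.1 ha1
      refine ⟨Finset.image_subset_image (mm_sub nb d χ v) p2, p2, fun h => ha2 (mem_filter.2 ⟨p1, h⟩), p1⟩
    have h3 : (A1 \ A2).card ≤ ((W v).filter (fun u => u ∈ mm nb d χ v ∧ χ u ∈ L c)).card := by
      apply Finset.card_le_card_of_injOn (rep v)
      · intro a ha
        obtain ⟨q1, q2, q3, q4⟩ := hA a (by exact_mod_cast ha)
        obtain ⟨p1, p2, p3⟩ := hrep v a q1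
        rw [Finset.mem_coe, mem_filter]
        refine ⟨mem_image_of_mem _ (mem_sdiff.2 ⟨q1, q3⟩), p3 q2, by rw [p2]; exact q4⟩
      · intro a ha a' ha' h
        have e1 := (hrep v a (hA a (by exact_mod_cast ha)).1).2.1
        have e2 := (hrep v a' (hA a' (by exact_mod_cast ha')).1).2.1
        rw [← e1, ← e2, h]
    have h4 : A1.card ≤ (A1 \ A2).card + A2.card := by
      have := Finset.le_card_sdiff A2 A1
      omega
    have h4' : (A1.card : ℝ) ≤ (A1 \ A2).card + A2.card := by exact_mod_cast h4
    have h3' : ((A1 \ A2).card : ℝ) ≤ ((W v).filter (fun u => u ∈ mm nb d χ v ∧ χ u ∈ L c)).card := by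
      exact_mod_cast h3
    have e : δ/(2*α) = 9*δ/(16*α) - δ/(16*α) := by field_simp; norm_num
    linarith
  have W5 : ∀ v u, ¬ bx nb d χ v → u ∈ W v → u ∈ mm nb d χ v → v ∈ W u := by
    intro v u hv hu hum
    have hunb := (memW v u hu).1
    have huniq : ∀ v' ∈ nb u, χ v' = χ v → v' = v := by
      intro v' hv' h
      unfold mm at hum
      rw [if_neg hv] at hum
      by_contra hne
      exact (mem_sdiff.1 hum).2 (mem_filter.2 ⟨hunb, v', hv', hne, h⟩)
    have h1 : χ v ∈ (nb u).image χ := mem_image_of_mem _ (hs _ _ hunb)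
    have h2 : χ v ∉ ((nb u).filter (bx nb d χ)).image χ := by
      intro h
      obtain ⟨x, hx, hxv⟩ := mem_image.1 h
      obtain ⟨hx1, hx2⟩ := mem_filter.1 hx
      rw [huniq x hx1 hxv] at hx2
      exact hv hx2
    obtain ⟨p1, p2, _⟩ := hrep u (χ v) h1
    have := huniq _ p1 p2
    rw [← this]
    exact mem_image_of_mem _ (mem_sdiff.2 ⟨h1, h2⟩)
  have hext := ext_main nb d (fun v => (hd v).le) hs W (fun v => L (χ v)) δ α β T
    (fun x u hu => (memW x u hu).1) hδ hα hβ hαβ hd0 hN (fun v => hL' _) hT1 (by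
      refine hη.trans ?_
      apply one_div_le_one_div_of_le (by positivity)
      have : 1 ≤ α * d := by nlinarith
      exact le_mul_of_one_le_right (by positivity) this) hTi d 0 (univ.filter (bx nb d χ))
    (fun v => ((nb v).filter (fun u => χ u ∈ L (χ v))).image χ) (by simp) (by
      intro x _ c
      refine (W4 x c).trans ?_
      have : (W x).filter (fun u => u ∈ mm nb d χ x ∧ χ u ∈ L c) ⊆ (W x).filter (fun v => c ∈ L (χ v)) := by
        intro u hu
        simp only [mem_filter] at hu ⊢
        exact ⟨hu.1, hLs _ _ hu.2.2⟩
      exact_mod_cast card_le_card this) (by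
      intro v
      have h1 := (hχ v (χ v)).2.2
      have h2 : ((((nb v).filter (fun u => χ u ∈ L (χ v))).image χ).card : ℝ) ≤
        ((nb v).filter (fun u => χ u ∈ L (χ v))).card := by exact_mod_cast card_image_le
      refine (h2.trans h1).trans (le_of_eq ?_)
      norm_num
      ring) (by
      intro v
      rw [← hd v]
      apply card_le_card
      intro x hx
      exact hs _ _ (memW x v (mem_filter.1 hx).2).1)
  obtain ⟨f, F, hF⟩ := hext
  have hX : ∀ x, x ∈ univ.filter (bx nb d χ) ↔ bx nb d χ x := by simp
  have FW : ∀ x, bx nb d χ x → ∀ v ∈ F x, v ∈ W x := fun x hx v hv => (hF x ((hX x).2 hx)).1 hv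
  have Fnb : ∀ x, bx nb d χ x → ∀ v ∈ F x, ¬ bx nb d χ v := fun x hx v hv =>
    (memW x v (FW x hx v hv)).2.1
  have irr : ∀ v, v ∉ nb v := fun v h => tf v v v h h h
  let H : SimpleGraph V :=
    { Adj := fun u v => (¬ bx nb d χ u ∧ ¬ bx nb d χ v ∧ u ∈ W v ∧ v ∈ W u ∧ 𝒢.Adj (χ u) (χ v)) ∨
        (bx nb d χ u ∧ v ∈ F u) ∨ (bx nb d χ v ∧ u ∈ F v)
      symm := ⟨by
        intro u v h
        rcases h with ⟨a, b, c, e, g⟩ | h | h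
        · exact Or.inl ⟨b, a, e, c, g.symm⟩
        · exact Or.inr (Or.inr h)
        · exact Or.inr (Or.inl h)⟩
      loopless := ⟨by
        intro v h
        rcases h with ⟨a, b, c, e, g⟩ | h | h
        · exact irr v (memW v v c).1
        · exact irr v (memW v v (FW v h.1 v h.2)).1
        · exact irr v (memW v v (FW v h.1 v h.2)).1⟩ }
  have hHadj : ∀ u v, H.Adj u v ↔ (¬ bx nb d χ u ∧ ¬ bx nb d χ v ∧ u ∈ W v ∧ v ∈ W u ∧ 𝒢.Adj (χ u) (χ v)) ∨
        (bx nb d χ u ∧ v ∈ F u) ∨ (bx nb d χ v ∧ u ∈ F v) := fun u v => Iff.rfl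
  let χ' : V → C := fun v => if bx nb d χ v then f v else χ v
  have χb : ∀ v, bx nb d χ v → χ' v = f v := fun v h => if_pos h
  have χn : ∀ v, ¬ bx nb d χ v → χ' v = χ v := fun v h => if_neg h
  refine ⟨H, χ', ?_, ?_, ?_, ?_⟩
  · intro u v h
    rcases (hHadj u v).1 h with ⟨a, b, c, e, g⟩ | h | h
    · exact (hnb u v).1 (memW u v e).1
    · exact (hnb u v).1 (memW u v (FW u h.1 v h.2)).1
    · exact ((hnb v u).1 (memW v u (FW v h.1 u h.2)).1).symm
  · intro v
    have e : δ/(4*α) = δ/(2*α)/2 := by field_simp; norm_num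
    by_cases hv : bx nb d χ v
    · refine ⟨F v, fun u hu => (hHadj v u).2 (Or.inr (Or.inl ⟨hv, hu⟩)), ?_⟩
      rw [e]
      exact (hF v ((hX v).2 hv)).2.1
    · refine ⟨_, fun u hu => ?_, le_trans ?_ (W4 v (χ v))⟩
      · obtain ⟨h1, h2, h3⟩ := mem_filter.1 hu
        exact (hHadj v u).2 (Or.inl ⟨hv, (memW v u h1).2.1, W5 v u hv h1 h2, h1, (hLa _ _).1 h3⟩)
      · rw [e]
        have : 0 ≤ δ/(2*α) := by positivity
        linarith
  · intro v u hu u' hu' heq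
    rw [SimpleGraph.mem_neighborSet, hHadj] at hu hu'
    by_contra hne
    by_cases hv : bx nb d χ v
    · have hh : ∀ w, ((¬ bx nb d χ v ∧ ¬ bx nb d χ w ∧ v ∈ W w ∧ w ∈ W v ∧ 𝒢.Adj (χ v) (χ w)) ∨
        (bx nb d χ v ∧ w ∈ F v) ∨ (bx nb d χ w ∧ v ∈ F w)) → w ∈ W v := by
        intro w hw
        rcases hw with h | h | h
        · exact absurd hv h.1
        · exact FW v hv w h.2
        · exact absurd hv (Fnb w h.1 v h.2)
      have h1 := hh u hu
      have h2 := hh u' hu'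
      rw [χn u (memW v u h1).2.1, χn u' (memW v u' h2).2.1] at heq
      exact hne (injW v u u' h1 h2 heq)
    · have hh : ∀ w, ((¬ bx nb d χ v ∧ ¬ bx nb d χ w ∧ v ∈ W w ∧ w ∈ W v ∧ 𝒢.Adj (χ v) (χ w)) ∨
        (bx nb d χ v ∧ w ∈ F v) ∨ (bx nb d χ w ∧ v ∈ F w)) →
          (¬ bx nb d χ w ∧ w ∈ W v ∧ χ w ∈ L (χ v)) ∨ (bx nb d χ w ∧ v ∈ F w) := by
        intro w hw
        rcases hw with h | h | h
        · exact Or.inl ⟨h.2.1, h.2.2.2.1, (hLa _ _).2 h.2.2.2.2⟩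
        · exact absurd h.1 hv
        · exact Or.inr h
      have mix : ∀ w x, (¬ bx nb d χ w ∧ w ∈ W v ∧ χ w ∈ L (χ v)) → (bx nb d χ x ∧ v ∈ F x) →
          χ' w ≠ χ' x := by
        intro w x hw hx h
        rw [χn w hw.1, χb x hx.1] at h
        apply ((hF x ((hX x).2 hx.1)).2.2.1 v hx.2).2
        rw [← h]
        exact mem_image_of_mem _ (mem_filter.2 ⟨(memW v w hw.2.1).1, hw.2.2⟩)
      rcases hh u hu with h1 | h1 <;> rcases hh u' hu' with h2 | h2
      · rw [χn u h1.1, χn u' h2.1] at heq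
        exact hne (injW v u u' h1.2.1 h2.2.1 heq)
      · exact mix u u' h1 h2 heq
      · exact mix u' u h2 h1 heq.symm
      · rw [χb u h1.1, χb u' h2.1] at heq
        exact (hF u ((hX u).2 h1.1)).2.2.2 u' ((hX u').2 h2.1) hne v h1.2 h2.2 heq
  · have hx : ∀ x v, bx nb d χ x → v ∈ F x → 𝒢.Adj (χ' v) (χ' x) := by
      intro x v hx hv
      rw [χb x hx, χn v (Fnb x hx v hv)]
      exact (hLa _ _).1 ((hF x ((hX x).2 hx)).2.2.1 v hv).1
    intro u v h
    rcases (hHadj u v).1 h with ⟨a, b, c, e, g⟩ | h | h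
    · rw [χn u a, χn v b]; exact g
    · exact (hx u v h.1 h.2).symm
    · exact hx v u h.1 h.2

end Assembly

section Final

lemma asym (ε : ℝ) (hε : 0 < ε) (α : ℝ) (hα : 1 ≤ α) :
    ∃ d₀ : ℕ, ∀ d : ℕ, d₀ ≤ d → 0 < d ∧ ∀ δ : ℝ, (d:ℝ)^ε < δ → ∃ T : ℕ, 1 ≤ T ∧
      (T:ℝ) ≤ δ/(16*α) ∧ (T:ℝ) ≤ δ/2^14 ∧ (2/3:ℝ)^T ≤ 1 / (16 * ((d:ℝ)+1)^6 * (α * d)) ∧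
      (∀ i : ℕ, 2^i ≤ d → (T:ℝ) ≤ δ / 2^13 / ((i+2)*(i+3))) := by
  set A := Real.log (1024 * α) with hA
  have hA0 : 0 ≤ A := Real.log_nonneg (by linarith)
  set K : ℝ := 25 * 2^13 * 16 * α with hK
  have hK0 : 0 < K := by positivity
  have e1 : ∀ᶠ x : ℝ in Filter.atTop, 24 + 3 * A ≤ Real.log x :=
    Real.tendsto_log_atTop.eventually_ge_atTop _
  have e2 : ∀ᶠ x : ℝ in Filter.atTop, ‖Real.log x ^ (4:ℝ)‖ ≤ (1/K) * ‖x ^ ε‖ :=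
    (isLittleO_log_rpow_rpow_atTop (4:ℝ) hε).bound (by positivity)
  have e3 := (e1.and (e2.and (Filter.eventually_gt_atTop 0)))
  have e4 := (tendsto_natCast_atTop_atTop (R := ℝ)).eventually e3
  obtain ⟨d₀, hd₀⟩ := Filter.eventually_atTop.1 e4
  refine ⟨d₀, fun d hd => ?_⟩
  obtain ⟨h1, h2, h3⟩ := hd₀ d hd
  set l := Real.log d with hl
  have hd0 : 0 < d := by exact_mod_cast h3
  have hd1 : (1:ℝ) ≤ d := by exact_mod_cast hd0
  refine ⟨hd0, fun δ hδ => ?_⟩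
  have hl1 : 24 ≤ l := by linarith
  have h4 : K * l^4 ≤ (d:ℝ)^ε := by
    rw [Real.norm_of_nonneg (by positivity), Real.norm_of_nonneg (by positivity)] at h2
    have : l ^ (4:ℝ) = l^4 := by exact_mod_cast Real.rpow_natCast l 4
    rw [this] at h2
    rw [one_div, inv_mul_eq_div, le_div_iff₀ hK0] at h2
    linarith
  have h5 : K * l^4 ≤ δ := by linarith
  have hl2 : 1 ≤ l^2 := by nlinarith
  have hl4 : l^2 ≤ l^4 := by nlinarith
  have hTl : ((⌊l^2⌋₊ : ℕ) : ℝ) ≤ l^2 := Nat.floor_le (by positivity)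
  refine ⟨⌊l^2⌋₊, Nat.le_floor (by simpa using hl2), ?_, ?_, ?_, ?_⟩
  · rw [le_div_iff₀ (by positivity)]
    have : l^2 * (16*α) ≤ K * l^4 := by
      rw [hK]
      have : l^2 * α ≤ l^4 * α := by gcongr
      have : 0 ≤ l^4 * α := by positivity
      nlinarith
    have : ((⌊l^2⌋₊ : ℕ) : ℝ) * (16*α) ≤ l^2 * (16*α) := by gcongr
    linarith
  · rw [le_div_iff₀ (by positivity)]
    have : l^4 * 1 ≤ l^4 * α := by gcongr
    rw [hK] at h5
    nlinarith
  · have c1 : (2/3:ℝ) ≤ Real.exp (-(1/3)) := by linarith [Real.add_one_le_exp (-(1/3):ℝ)]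
    have c2 : l^2 - 1 ≤ ((⌊l^2⌋₊ : ℕ) : ℝ) := by linarith [Nat.lt_floor_add_one (l^2)]
    have c3 : (16 * ((d:ℝ)+1)^6 * (α * d)) ≤ Real.exp (A + 7 * l) := by
      have : Real.exp (A + 7*l) = 1024 * α * d^7 := by
        rw [Real.exp_add, hA, Real.exp_log (by positivity)]
        congr 1
        have : (7:ℝ) * l = ((7:ℕ):ℝ) * l := by norm_num
        rw [this, Real.exp_nat_mul, hl, Real.exp_log h3]
      rw [this]
      calc (16 * ((d:ℝ)+1)^6 * (α * d)) ≤ 16 * ((d:ℝ)+d)^6 * (α * d) := by gcongr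
        _ = _ := by ring
    calc (2/3:ℝ)^⌊l^2⌋₊ ≤ (Real.exp (-(1/3)))^⌊l^2⌋₊ := by gcongr
      _ = Real.exp (⌊l^2⌋₊ * (-(1/3))) := by rw [Real.exp_nat_mul]
      _ ≤ Real.exp (-(A + 7*l)) := by
        apply Real.exp_le_exp.2
        nlinarith
      _ = 1 / Real.exp (A + 7 * l) := by rw [Real.exp_neg, one_div]
      _ ≤ _ := one_div_le_one_div_of_le (by positivity) c3
  · intro i hi
    have hi' : (2:ℝ)^i ≤ d := by exact_mod_cast hi
    have hil : (i:ℝ) * Real.log 2 ≤ l := by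
      have := Real.log_le_log (by positivity) hi'
      rwa [Real.log_pow] at this
    have hlog := Real.log_two_gt_d9
    have hi0 : (0:ℝ) ≤ i := by positivity
    have hi2 : (i:ℝ) ≤ 2 * l := by nlinarith
    have hq : ((i:ℝ)+2)*(i+3) ≤ (5*l)*(5*l) := by
      gcongr <;> linarith
    rw [div_div, le_div_iff₀ (by positivity)]
    have : ((⌊l^2⌋₊ : ℕ) : ℝ) * (2^13 * (((i:ℝ)+2)*(i+3))) ≤ l^2 * (2^13 * ((5*l)*(5*l))) := by gcongr
    have h6 : l^4 * 1 ≤ l^4 * α := by gcongr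
    have h7 : 0 ≤ l^4 := by positivity
    rw [hK] at h5
    nlinarith

end Final

theorem statement4 (ε : ℝ) (hε : 0 < ε) (β : ℕ) (hβ : 1 ≤ β) :
    ∃ α₀ : ℕ, ∀ α : ℕ, 32 * β ≤ α → α₀ ≤ α →
      ∃ d₀ : ℕ, ∀ d : ℕ, d₀ ≤ d →
        ∀ (V : Type) [Fintype V] (G : SimpleGraph V) (A B : Set V),
          Disjoint A B → A ∪ B = Set.univ →
          (∀ u v : V, G.Adj u v → (u ∈ A ∧ v ∈ B) ∨ (u ∈ B ∧ v ∈ A)) →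
          RegularDeg G d →
          ∀ 𝒢 : SimpleGraph (Fin (α * d)),
            maxDeg 𝒢 ≤ β * minDeg 𝒢 →
            (d : ℝ) ^ ε < (minDeg 𝒢 : ℝ) →
            ∃ (H : SimpleGraph V) (χ : V → Fin (α * d)), H ≤ G ∧
              (∀ v : V, (minDeg 𝒢 : ℝ) / (4 * (α : ℝ)) ≤ (deg H v : ℝ)) ∧
              (∀ v : V, Set.InjOn χ (H.neighborSet v)) ∧
              (∀ u v : V, H.Adj u v → 𝒢.Adj (χ u) (χ v)) := by
  refine ⟨24 * 2^13 * β, fun α _ hα₀ => ?_⟩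
  have hα1 : 256 ≤ α := by omega
  obtain ⟨d₀, hd₀⟩ := asym ε hε (α:ℝ) (by exact_mod_cast (by omega : 1 ≤ α))
  refine ⟨d₀, fun d hd V _ G A B hAB _ hbip hreg 𝒢 hmax hmin => ?_⟩
  classical
  obtain ⟨hd0, hδ⟩ := hd₀ d hd
  obtain ⟨T, hT1, hT2, hT3, hT4, hT5⟩ := hδ _ hmin
  have hNpos : 0 < α * d := Nat.mul_pos (by omega) hd0
  haveI : Nonempty (Fin (α * d)) := ⟨⟨0, hNpos⟩⟩
  have hdegG : ∀ v, (G.neighborFinset v).card = d := by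
    intro v
    rw [← hreg v, deg, Set.ncard_eq_toFinset_card']
    rfl
  have hdegC : ∀ c, (𝒢.neighborFinset c).card = deg 𝒢 c := by
    intro v
    rw [deg, Set.ncard_eq_toFinset_card']
    rfl
  have hlow : ∀ c, minDeg 𝒢 ≤ (𝒢.neighborFinset c).card := by
    intro c
    rw [hdegC]
    exact ciInf_le (OrderBot.bddBelow _) c
  have hup : ∀ c, (𝒢.neighborFinset c).card ≤ β * minDeg 𝒢 := by
    intro c
    rw [hdegC]
    exact (le_ciSup (Set.finite_range (deg 𝒢)).bddAbove c).trans hmax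
  obtain ⟨H, χ, h1, h2, h3, h4⟩ := assemble G 𝒢 (fun v => G.neighborFinset v)
    (fun c => 𝒢.neighborFinset c) (fun v u => G.mem_neighborFinset v u)
    (fun c a => 𝒢.mem_neighborFinset c a) d hdegG hd0 (by
      intro v u w hu hw hwv
      rw [SimpleGraph.mem_neighborFinset] at hu hw hwv
      have hdis := Set.disjoint_left.1 hAB
      rcases hbip _ _ hu with a | a <;> rcases hbip _ _ hw with b | b <;>
        rcases hbip _ _ hwv with c | c
      · exact hdis b.1 a.2
      · exact hdis b.1 a.2
      · exact hdis b.2 c.2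
      · exact hdis a.1 c.1
      · exact hdis c.1 a.1
      · exact hdis c.2 b.2
      · exact hdis a.2 b.1
      · exact hdis a.2 b.1) (α:ℝ) (β:ℝ) (minDeg 𝒢 : ℝ) T
    (by exact_mod_cast hα1) (by positivity) (by exact_mod_cast hα₀)
    (lt_of_le_of_lt (by positivity) hmin) (by simp)
    (fun c => by exact_mod_cast hlow c) (fun c => by exact_mod_cast hup c) hT1 hT2 hT3 hT4 hT5
  refine ⟨H, χ, h1, fun v => ?_, h3, h4⟩
  obtain ⟨S, hS1, hS2⟩ := h2 v
  refine hS2.trans ?_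
  have : S.card ≤ deg H v := by
    rw [deg, ← Set.ncard_coe_finset]
    exact Set.ncard_le_ncard (fun u hu => hS1 u (by exact_mod_cast hu)) (Set.toFinite _)
  exact_mod_cast this
end

section
/- For every integer r ≥ 1 there exist a constant c > 0 and an integer d₀ such that for all d ≥ d₀, every d-regular graph G has a spanning subgraph H with girth at least 2r + 2 (i.e., H contains no cycle of length at most 2r + 1) and minimum degree δ(H) ≥ c · d^{1/(2r−1)}. -/
open SimpleGraph

open Classical in
noncomputable def NN {V : Type} [Fintype V] (H : SimpleGraph V) (v : V) : Finset V :=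
  Finset.univ.filter (fun u => H.Adj v u)

lemma mem_NN {V : Type} [Fintype V] (H : SimpleGraph V) (v u : V) :
    u ∈ NN H v ↔ H.Adj v u := by simp [NN]

lemma deg_eq_NN {V : Type} [Fintype V] (H : SimpleGraph V) (v : V) :
    deg H v = (NN H v).card := by
  rw [deg, ← Set.ncard_coe_finset]
  congr 1
  ext u
  simp [mem_NN]

def NoCyc {V : Type} (H : SimpleGraph V) (n : ℕ) : Prop :=
  ∀ j, 3 ≤ j → j ≤ n → ∀ g : ZMod j → V, Function.Injective g → ¬ ∀ i, H.Adj (g i) (g (i+1))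

lemma NoCyc.mono {V : Type} {H K : SimpleGraph V} {n : ℕ} (h : NoCyc K n) (hle : H ≤ K) :
    NoCyc H n := fun j h3 hn g hg hc => h j h3 hn g hg (fun i => hle (hc i))

lemma NoCyc.noCopy {V : Type} {H : SimpleGraph V} {n : ℕ} (h : NoCyc H n) (j : ℕ)
    (h3 : 3 ≤ j) (hj : j ≤ n) : ¬ ContainsCopy (cycleGraph j) H := by
  rintro ⟨f, hf⟩
  obtain ⟨m, rfl⟩ : ∃ m, j = m + 2 := ⟨j - 2, by omega⟩
  refine h (m+2) h3 hj (fun i => f i) hf (fun i => f.map_adj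
    (cycleGraph_adj.mpr (Or.inr ?_)))
  exact add_sub_cancel_left (G := ZMod (m+2)) i 1

lemma parity_cycle {V : Type} {G : SimpleGraph V} (χ : V → Bool)
    (hχ : ∀ u v, G.Adj u v → χ u ≠ χ v) (j : ℕ) (g : ZMod j → V)
    (hg : ∀ i, G.Adj (g i) (g (i+1))) : Even j := by
  have key : ∀ n : ℕ, χ (g (n : ZMod j)) = χ (g 0) ↔ Even n := by
    intro n
    induction n with
    | zero => simp
    | succ n ih =>
      have := hχ _ _ (hg n)
      rw [Nat.even_add_one, ← ih]
      push_cast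
      revert this
      cases χ (g (n : ZMod j)) <;> cases χ (g 0) <;> cases χ (g ((n : ZMod j) + 1)) <;> simp
  rw [← key]
  simp

lemma noCyc_add {V : Type} {G H : SimpleGraph V} (χ : V → Bool)
    (hχ : ∀ u v, G.Adj u v → χ u ≠ χ v) (r : ℕ) (hle : H ≤ G) (x s : V)
    (hxs : G.Adj x s) (hc : NoCyc H (2*r+1))
    (hw : ∀ w : H.Walk x s, ¬ w.length ≤ 2*r-1) :
    NoCyc (H ⊔ edge x s) (2*r+1) := by
  intro j h3 hj g hg hadj
  have hle' : H ⊔ edge x s ≤ G := sup_le hle (by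
    intro a b hab
    rw [edge_adj] at hab
    rcases hab with ⟨⟨rfl, rfl⟩ | ⟨rfl, rfl⟩, _⟩
    · exact hxs
    · exact hxs.symm)
  have hev := parity_cycle χ hχ j g (fun i => hle' (hadj i))
  have hj2 : j - 1 ≤ 2*r-1 := by
    obtain ⟨t, rfl⟩ := hev
    omega
  have : ∃ i, ¬ H.Adj (g i) (g (i+1)) := by
    by_contra! hcon
    exact hc j h3 hj g hg hcon
  obtain ⟨i, hi⟩ := this
  have hi2 : (g i = x ∧ g (i+1) = s) ∨ (g i = s ∧ g (i+1) = x) := by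
    have := hadj i
    rw [sup_adj, edge_adj] at this
    tauto
  have hne : ∀ t : ℕ, 1 ≤ t → t < j → ((t : ℕ) : ZMod j) ≠ 0 := by
    intro t h1 h2 h0
    rw [ZMod.natCast_eq_zero_iff] at h0
    exact absurd (Nat.le_of_dvd h1 h0) (by omega)
  have hstep : ∀ t : ℕ, 1 ≤ t → t < j → H.Adj (g (i + t)) (g (i + t + 1)) := by
    intro t h1 h2
    by_contra hcon
    have h3' : (g (i+t) = x ∧ g (i+t+1) = s) ∨ (g (i+t) = s ∧ g (i+t+1) = x) := by
      have := hadj (i+t)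
      rw [sup_adj, edge_adj] at this
      tauto
    have hA : g (i+t) = g i → False := by
      intro h
      have := hg h
      exact hne t h1 h2 (by simpa using this)
    have hB : g (i+t) = g (i+1) → g (i+t+1) = g i → False := by
      intro h h'
      have e1 := hg h
      have e2 := hg h'
      rw [e1] at e2
      refine hne 2 (by omega) (by omega) ?_
      push_cast
      linear_combination e2
    grind
  have hwalk : ∀ t : ℕ, t < j → ∃ w : H.Walk (g (i+1)) (g (i+1+t)), w.length = t := by
    intro t
    induction t with
    | zero => intro _; exact ⟨(Walk.nil).copy rfl (by simp), by simp⟩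
    | succ t ih =>
      intro ht
      obtain ⟨w, hw⟩ := ih (by omega)
      have hs := hstep (t+1) (by omega) ht
      have e1 : i + ((t+1 : ℕ) : ZMod j) = i + 1 + t := by push_cast; ring
      have e2 : i + ((t+1 : ℕ) : ZMod j) + 1 = i + 1 + ((t+1 : ℕ) : ZMod j) := by push_cast; ring
      rw [e2, e1] at hs
      exact ⟨w.concat hs, by simp [hw]⟩
  obtain ⟨w, hwl⟩ := hwalk (j-1) (by omega)
  have e : i + 1 + ((j-1 : ℕ) : ZMod j) = i := by
    rw [Nat.cast_sub (by omega)]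
    simp
  have hw2 : ∃ w : H.Walk (g (i+1)) (g i), w.length ≤ 2*r-1 :=
    ⟨w.copy rfl (by rw [e]), by simp; omega⟩
  obtain ⟨w2, hw2⟩ := hw2
  rcases hi2 with ⟨ha, hb⟩ | ⟨ha, hb⟩
  · exact hw (w2.reverse.copy ha hb) (by simpa using hw2)
  · exact hw (w2.copy hb ha) (by simpa using hw2)

lemma ball_card {V : Type} [Fintype V] (H : SimpleGraph V) (D : ℕ)
    (hD : ∀ v, (NN H v).card ≤ D) (x : V) (n : ℕ) :
    ∃ B : Finset V, B.card ≤ (D+1)^n ∧ ∀ y, ∀ w : H.Walk x y, w.length ≤ n → y ∈ B := by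
  classical
  induction n with
  | zero =>
    refine ⟨{x}, by simp, ?_⟩
    intro y w hw
    have := Walk.eq_of_length_eq_zero (Nat.le_zero.mp hw)
    simp [this]
  | succ n ih =>
    obtain ⟨B, hB, hBw⟩ := ih
    refine ⟨B.biUnion (fun b => insert b (NN H b)), ?_, ?_⟩
    · calc _ ≤ B.card * (D+1) := Finset.card_biUnion_le_card_mul _ _ _ (fun b _ =>
            (Finset.card_insert_le _ _).trans (by simpa using hD b))
        _ ≤ _ := by rw [pow_succ]; gcongr
    · intro y w hw
      rw [Finset.mem_biUnion]
      by_cases h : w.length ≤ n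
      · exact ⟨y, hBw y w h, by simp⟩
      · have hnn : ¬ w.Nil := by
          intro h0
          have := Walk.length_eq_zero_iff.mpr h0
          omega
        refine ⟨w.penultimate, hBw _ w.dropLast ?_, ?_⟩
        · simp; omega
        · simp [mem_NN, w.adj_penultimate hnn]

open Classical in
lemma card_add {V : Type} [Fintype V] (H : SimpleGraph V) (x s : V) (hne : x ≠ s)
    (hn : ¬ H.Adj x s) (y : V) :
    (NN (H ⊔ edge x s) y).card =
      (NN H y).card + (if y = x then 1 else 0) + (if y = s then 1 else 0) := by
  have hn' : ¬ H.Adj s x := fun h => hn h.symm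
  by_cases h1 : y = x
  · subst h1
    have : NN (H ⊔ edge y s) y = insert s (NN H y) := by
      ext u; simp only [mem_NN, sup_adj, edge_adj, Finset.mem_insert]; grind
    rw [this, Finset.card_insert_of_notMem (by simpa [mem_NN])]
    simp [hne]
  · by_cases h2 : y = s
    · subst h2
      have : NN (H ⊔ edge x y) y = insert x (NN H y) := by
        ext u; simp only [mem_NN, sup_adj, edge_adj, Finset.mem_insert]; grind
      rw [this, Finset.card_insert_of_notMem (by simpa [mem_NN])]
      simp [h1]
    · have : NN (H ⊔ edge x s) y = NN H y := by
        ext u; simp only [mem_NN, sup_adj, edge_adj]; grind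
      simp [this, h1, h2]

open Classical in
lemma card_del {V : Type} [Fintype V] (H : SimpleGraph V) (x s : V)
    (hn : H.Adj x s) (y : V) :
    (NN (H \ edge x s) y).card + (if y = x then 1 else 0) + (if y = s then 1 else 0)
      = (NN H y).card := by
  rw [← card_add _ _ _ hn.ne (by simp [edge_adj, hn.ne])]
  congr 2
  apply sdiff_sup_cancel
  intro a b hab
  rw [edge_adj] at hab
  rcases hab with ⟨⟨rfl, rfl⟩ | ⟨rfl, rfl⟩, _⟩
  · exact hn
  · exact hn.symm

lemma maxcut {V : Type} [Fintype V] (G : SimpleGraph V) :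
    ∃ χ : V → Bool, ∀ v, (NN G v).card ≤ 2 * ((NN G v).filter (fun u => χ v ≠ χ u)).card := by
  classical
  let a : V → V → ℤ := fun u v => if G.Adj u v then 1 else 0
  let Q : (V → ℤ) → ℤ := fun σ => ∑ u, ∑ w, a u w * σ u * σ w
  let e : Bool → ℤ := fun b => if b then 1 else -1
  obtain ⟨χ, hχ⟩ := Finite.exists_min (fun χ : V → Bool => Q (fun v => e (χ v)))
  refine ⟨χ, fun v => ?_⟩
  have h1 := hχ (Function.update χ v (!χ v))
  set σ : V → ℤ := fun v => e (χ v) with hσ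
  have h2 : (fun u => e (Function.update χ v (!χ v) u)) =
      fun u => σ u + (if u = v then -2 * σ v else 0) := by
    ext u
    by_cases h : u = v
    · subst h
      simp only [Function.update_self, hσ, if_true, e]
      cases χ u <;> simp
    · simp [Function.update_of_ne h, h, hσ]
  rw [h2] at h1
  have hsym : ∀ u w, a u w = a w u := fun u w => by simp [a, G.adj_comm]
  have h3 : Q (fun u => σ u + (if u = v then -2 * σ v else 0)) =
      Q σ - 4 * ∑ w, a v w * σ v * σ w := by
    simp only [Q, mul_add, add_mul, Finset.sum_add_distrib, mul_ite, ite_mul, mul_zero, zero_mul,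
      Finset.sum_ite_eq', Finset.sum_ite_irrel, Finset.sum_const_zero, Finset.mem_univ, if_true]
    have h5 : ∑ x, a x v * σ x * (-2 * σ v) = -2 * ∑ w, a v w * σ v * σ w := by
      rw [Finset.mul_sum]
      refine Finset.sum_congr rfl fun w _ => ?_
      rw [hsym]; ring
    have h6 : ∑ x, a v x * (-2 * σ v) * σ x = -2 * ∑ w, a v w * σ v * σ w := by
      rw [Finset.mul_sum]
      refine Finset.sum_congr rfl fun w _ => ?_
      ring
    have h7 : a v v = 0 := by simp [a]
    rw [h5, h6, h7]
    ring
  rw [h3] at h1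
  have h4 : ∑ w, a v w * σ v * σ w = (NN G v).card -
      2 * ((NN G v).filter (fun u => χ v ≠ χ u)).card := by
    rw [Finset.card_filter, Finset.card_eq_sum_ones]
    push_cast
    rw [Finset.mul_sum, ← Finset.sum_sub_distrib, NN, Finset.sum_filter]
    refine Finset.sum_congr rfl fun w _ => ?_
    by_cases h : G.Adj v w
    · simp only [a, h, if_true, hσ, e]
      cases χ v <;> cases χ w <;> simp
    · simp [a, h]
  have : (0:ℤ) ≤ 2 * ((NN G v).filter (fun u => χ v ≠ χ u)).card - (NN G v).card := by
    have : Q σ ≤ Q σ - 4 * ∑ w, a v w * σ v * σ w := h1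
    rw [h4] at this
    linarith
  omega

def Valid {V : Type} [Fintype V] (G : SimpleGraph V) (r k : ℕ) (H : SimpleGraph V) : Prop :=
  H ≤ G ∧ NoCyc H (2*r+1) ∧ ∀ v, (NN H v).card ≤ 5*k

noncomputable def pot {V : Type} [Fintype V] (k : ℕ) (H : SimpleGraph V) : ℕ :=
  ∑ v, min (NN H v).card k

open Classical in
def SwapInv {V : Type} [Fintype V] (G : SimpleGraph V) (χ : V → Bool) (r k : ℕ)
    (H : SimpleGraph V) (v₀ : V) (S : Finset V) : Prop :=
  ∃ R : Finset V, v₀ ∈ R ∧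
    (∀ s ∈ S, (NN H s).card = 5*k ∧ NN H s ⊆ R) ∧
    (∀ x ∈ R, (NN H x).card ≤ k ∧ χ x = χ v₀ ∧ ∃ K : SimpleGraph V, Valid G r k K ∧
      (∀ s ∉ S, χ s ≠ χ v₀ → ∀ y, K.Adj s y ↔ H.Adj s y) ∧
      ∀ y, (NN K y).card + (if y = x then 1 else 0) = (NN H y).card + (if y = v₀ then 1 else 0))

lemma exists_good {V : Type} [Fintype V] (G H : SimpleGraph V) (d k f : ℕ) (hd : 1 ≤ d)
    (hk : 1 ≤ k) (hf : 4 * f ≤ d)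
    (hu : ∀ v, (NN G v).card ≤ d) (hl : ∀ v, d ≤ 2 * (NN G v).card)
    (R S : Finset V) (hR : R.Nonempty)
    (hS : ∀ s ∈ S, (NN H s).card = 5*k ∧ NN H s ⊆ R)
    (hRk : ∀ x ∈ R, (NN H x).card ≤ k)
    (B : V → Finset V) (hB : ∀ x ∈ R, (B x).card ≤ f) :
    ∃ x ∈ R, ∃ s ∈ NN G x, s ∉ S ∧ s ∉ B x := by
  classical
  by_contra! hcon
  have comm : ∀ K : SimpleGraph V, ∑ x ∈ R, (S.filter (fun s => K.Adj x s)).card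
      = ∑ s ∈ S, (R.filter (fun x => K.Adj x s)).card := fun K =>
    Finset.sum_card_bipartiteAbove_eq_sum_card_bipartiteBelow (fun x s => K.Adj x s)
  have h1 : ∀ x ∈ R, d ≤ 4 * (S.filter (fun s => G.Adj x s)).card := by
    intro x hx
    have hsub : NN G x ⊆ S.filter (fun s => G.Adj x s) ∪ B x := by
      intro s hs
      by_cases h : s ∈ S
      · simp [h, (mem_NN _ _ _).1 hs]
      · simp [hcon x hx s hs h]
    have := (Finset.card_le_card hsub).trans (Finset.card_union_le _ _)
    have := hB x hx
    have := hl x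
    omega
  have h2 : R.card * d ≤ 4 * (S.card * d) := by
    calc R.card * d = ∑ x ∈ R, d := by simp
      _ ≤ ∑ x ∈ R, 4 * (S.filter (fun s => G.Adj x s)).card := Finset.sum_le_sum h1
      _ = 4 * ∑ s ∈ S, (R.filter (fun x => G.Adj x s)).card := by
        rw [← Finset.mul_sum, comm]
      _ ≤ 4 * ∑ s ∈ S, d := by
        gcongr with s hs
        refine (Finset.card_le_card ?_).trans (hu s)
        intro x hx
        simp only [Finset.mem_filter] at hx
        exact (mem_NN _ _ _).2 hx.2.symm
      _ = _ := by simp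
  have h3 : S.card * (5*k) ≤ R.card * k := by
    calc S.card * (5*k) = ∑ s ∈ S, 5*k := by simp
      _ ≤ ∑ s ∈ S, (R.filter (fun x => H.Adj x s)).card := by
        gcongr with s hs
        rw [← (hS s hs).1]
        refine Finset.card_le_card ?_
        intro x hx
        simp [(hS s hs).2 hx, ((mem_NN _ _ _).1 hx).symm]
      _ = ∑ x ∈ R, (S.filter (fun s => H.Adj x s)).card := (comm H).symm
      _ ≤ ∑ x ∈ R, k := by
        gcongr with x hx
        refine (Finset.card_le_card ?_).trans (hRk x hx)
        intro s hs
        simp only [Finset.mem_filter] at hs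
        exact (mem_NN _ _ _).2 hs.2
      _ = _ := by simp
  have h4 : R.card ≤ 4 * S.card := by
    refine Nat.le_of_mul_le_mul_right (c := d) ?_ hd
    linarith
  have h5 : S.card * 5 ≤ R.card := by
    refine Nat.le_of_mul_le_mul_right (c := k) ?_ hk
    linarith
  have := hR.card_pos
  omega

lemma pot_lt {V : Type} [Fintype V] (k : ℕ) (H K : SimpleGraph V) (v₀ : V)
    (h : ∀ v, min (NN H v).card k ≤ (NN K v).card) (h0 : (NN H v₀).card < k)
    (h1 : (NN H v₀).card < (NN K v₀).card) : pot k H < pot k K := by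
  refine Finset.sum_lt_sum (fun v _ => ?_) ⟨v₀, Finset.mem_univ _, ?_⟩
  · have := h v
    omega
  · omega

open Classical in
lemma inv_step {V : Type} [Fintype V] (G : SimpleGraph V) (χ : V → Bool)
    (hχ : ∀ u v, G.Adj u v → χ u ≠ χ v) (r k d : ℕ) (hr : 1 ≤ r) (hk : 1 ≤ k)
    (hu : ∀ v, (NN G v).card ≤ d) (hl : ∀ v, d ≤ 2 * (NN G v).card)
    (hf : 4 * (5*k+1)^(2*r-1) ≤ d) (H : SimpleGraph V) (hH : Valid G r k H)
    (hmax : ∀ K, Valid G r k K → pot k K ≤ pot k H) (v₀ : V) (hv₀ : (NN H v₀).card < k)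
    (S : Finset V) (hI : SwapInv G χ r k H v₀ S) : ∃ s ∉ S, SwapInv G χ r k H v₀ (insert s S) := by
  classical
  obtain ⟨R, hR0, hS, hR⟩ := hI
  choose! hRk hRχ K hK hKH hKd using hR
  have hball : ∀ x, ∃ B : Finset V, x ∈ R → (B.card ≤ (5*k+1)^(2*r-1) ∧
      ∀ y, ∀ w : (K x).Walk x y, w.length ≤ 2*r-1 → y ∈ B) := by
    intro x
    by_cases hx : x ∈ R
    · obtain ⟨B, hB⟩ := ball_card (K x) (5*k) (hK x hx).2.2 x (2*r-1)
      exact ⟨B, fun _ => hB⟩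
    · exact ⟨∅, fun h => absurd h hx⟩
  choose B hB using hball
  have hd : 1 ≤ d := by
    have : 0 < (5*k+1)^(2*r-1) := by positivity
    omega
  obtain ⟨x, hx, s, hs, hsS, hsB⟩ := exists_good G H d k _ hd hk hf hu hl R S ⟨v₀, hR0⟩ hS
    hRk B (fun x hx => (hB x hx).1)
  rw [mem_NN] at hs
  have hwalk : ∀ w : (K x).Walk x s, ¬ w.length ≤ 2*r-1 := fun w hw =>
    hsB ((hB x hx).2 s w hw)
  have hnadj : ¬ (K x).Adj x s := fun h => hwalk h.toWalk (by simp; omega)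
  have hsχ : χ s ≠ χ v₀ := by
    rw [← hRχ x hx]; exact (hχ _ _ hs).symm
  have hsv : s ≠ v₀ := fun h => hsχ (by rw [h])
  have hcyc := noCyc_add χ hχ r (hK x hx).1 x s hs (hK x hx).2.1 hwalk
  have hle' : K x ⊔ edge x s ≤ G := sup_le (hK x hx).1 (by
    intro a b hab
    rw [edge_adj] at hab
    rcases hab with ⟨⟨rfl, rfl⟩ | ⟨rfl, rfl⟩, _⟩
    · exact hs
    · exact hs.symm)
  have hdeg : ∀ y, (NN (K x ⊔ edge x s) y).card =
      (NN H y).card + (if y = v₀ then 1 else 0) + (if y = s then 1 else 0) := by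
    intro y
    rw [card_add _ _ _ hs.ne hnadj, hKd x hx y]
  have hsat : (NN H s).card = 5 * k := by
    by_contra hne
    have hlt : (NN H s).card < 5*k := lt_of_le_of_ne (hH.2.2 s) hne
    have hval : Valid G r k (K x ⊔ edge x s) := by
      refine ⟨hle', hcyc, fun y => ?_⟩
      rw [hdeg]
      have := hH.2.2 y
      grind
    have := pot_lt k H (K x ⊔ edge x s) v₀ (fun v => by rw [hdeg]; omega) hv₀
      (by rw [hdeg, if_pos rfl]; omega)
    have := hmax _ hval
    omega
  -- the new graphs
  have hnew : ∀ x', H.Adj s x' → x' ∉ R →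
      Valid G r k ((K x ⊔ edge x s) \ edge s x') ∧
      ∀ y, (NN ((K x ⊔ edge x s) \ edge s x') y).card + (if y = x' then 1 else 0)
        = (NN H y).card + (if y = v₀ then 1 else 0) := by
    intro x' hx' hx'R
    have hadj : (K x ⊔ edge x s).Adj s x' := by
      rw [sup_adj]; left
      exact (hKH x hx s hsS hsχ x').2 hx'
    have hd2 : ∀ y, (NN ((K x ⊔ edge x s) \ edge s x') y).card + (if y = x' then 1 else 0)
        = (NN H y).card + (if y = v₀ then 1 else 0) := by
      intro y
      have h1 := card_del _ _ _ hadj y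
      rw [hdeg] at h1
      omega
    refine ⟨⟨sdiff_le.trans hle', hcyc.mono sdiff_le, fun y => ?_⟩, hd2⟩
    have h1 := hd2 y
    have h2 := hH.2.2 y
    by_cases h : y = v₀
    · subst h; simp at h1; omega
    · simp [h] at h1; omega
  refine ⟨s, hsS, R ∪ NN H s, by simp [hR0], ?_, ?_⟩
  · intro t ht
    rw [Finset.mem_insert] at ht
    rcases ht with rfl | ht
    · exact ⟨hsat, Finset.subset_union_right⟩
    · exact ⟨(hS t ht).1, (hS t ht).2.trans Finset.subset_union_left⟩
  · intro x' hx'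
    by_cases hx'R : x' ∈ R
    · refine ⟨hRk x' hx'R, hRχ x' hx'R, K x', hK x' hx'R, ?_, hKd x' hx'R⟩
      intro t ht
      exact hKH x' hx'R t (fun h => ht (by simp [h]))
    · have hadj : H.Adj s x' := by
        rw [Finset.mem_union, mem_NN] at hx'
        tauto
      obtain ⟨hval, hd2⟩ := hnew x' hadj hx'R
      have hx'v : x' ≠ v₀ := fun h => hx'R (h ▸ hR0)
      have hx'χ : χ x' = χ v₀ := by
        have := hχ _ _ (hH.1 hadj)
        revert this hsχ
        cases χ x' <;> cases χ s <;> cases χ v₀ <;> simp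
      refine ⟨?_, hx'χ, _, hval, ?_, hd2⟩
      · by_contra hgt
        have := pot_lt k H _ v₀ (fun v => ?_) hv₀ ?_ |>.trans_le (hmax _ hval)
        · exact lt_irrefl _ this
        · have h1 := hd2 v
          by_cases h : v = x'
          · subst h; simp at h1; omega
          · simp [h] at h1; omega
        · have h1 := hd2 v₀
          simp [hx'v.symm] at h1
          omega
      · intro t ht htχ y
        rw [Finset.mem_insert, not_or] at ht
        rw [← hKH x hx t ht.2 htχ y, sdiff_adj, sup_adj, edge_adj, edge_adj]
        have h1 : t ≠ x := fun h => htχ (by rw [h, hRχ x hx])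
        have h2 : t ≠ x' := fun h => htχ (by rw [h, hx'χ])
        have h3 := ht.1
        tauto

lemma core_s9 {V : Type} [Fintype V] (G : SimpleGraph V) (χ : V → Bool)
    (hχ : ∀ u v, G.Adj u v → χ u ≠ χ v) (r k d : ℕ) (hr : 1 ≤ r) (hk : 1 ≤ k)
    (hu : ∀ v, (NN G v).card ≤ d) (hl : ∀ v, d ≤ 2 * (NN G v).card)
    (hf : 4 * (5*k+1)^(2*r-1) ≤ d) :
    ∃ H ≤ G, NoCyc H (2*r+1) ∧ ∀ v, k ≤ (NN H v).card := by
  classical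
  have hbot : Valid G r k (⊥ : SimpleGraph V) := by
    refine ⟨bot_le, fun j _ _ g _ h => ?_, fun v => ?_⟩
    · exact (h 0).elim
    · simp [NN]
  obtain ⟨H, hH, hmax⟩ := Set.exists_max_image {H | Valid G r k H} (pot k)
    (Set.toFinite _) ⟨_, hbot⟩
  refine ⟨H, hH.1, hH.2.1, ?_⟩
  by_contra! hcon
  obtain ⟨v₀, hv₀⟩ := hcon
  have h0 : SwapInv G χ r k H v₀ ∅ := by
    refine ⟨{v₀}, by simp, by simp, ?_⟩
    intro x hx
    rw [Finset.mem_singleton] at hx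
    subst hx
    exact ⟨hv₀.le, rfl, H, hH, fun _ _ _ _ => Iff.rfl, fun _ => rfl⟩
  obtain ⟨S, hS, hSmax⟩ := Set.exists_max_image {S | SwapInv G χ r k H v₀ S} Finset.card
    (Set.toFinite _) ⟨_, h0⟩
  obtain ⟨s, hs, hI⟩ := inv_step G χ hχ r k d hr hk hu hl hf H hH hmax v₀ hv₀ S hS
  have := hSmax _ hI
  rw [Finset.card_insert_of_notMem hs] at this
  omega

lemma choose_k (m d : ℕ) (hm : 1 ≤ m) (hd : 4 * 6^m ≤ d) :
    ∃ k : ℕ, 1 ≤ k ∧ 4 * (5*k+1)^m ≤ d ∧ (1/48 : ℝ) * (d:ℝ)^((1:ℝ)/m) ≤ k := by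
  have hm0 : (m:ℝ) ≠ 0 := by positivity
  set y : ℝ := ((d:ℝ)/4)^((1:ℝ)/m) with hy
  have hd4 : (6:ℝ)^m ≤ (d:ℝ)/4 := by
    have : ((4 * 6^m : ℕ) : ℝ) ≤ d := by exact_mod_cast hd
    push_cast at this
    linarith
  have hy0 : 0 ≤ y := by positivity
  have hym : y^m = (d:ℝ)/4 := by
    rw [hy, ← Real.rpow_natCast, ← Real.rpow_mul (by positivity)]
    rw [one_div, inv_mul_cancel₀ hm0, Real.rpow_one]
  have hy6 : 6 ≤ y := by
    by_contra! h
    have : y^m < 6^m := pow_lt_pow_left₀ h hy0 (by omega)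
    linarith
  have hfl : (⌊y/6⌋₊ : ℝ) ≤ y/6 := Nat.floor_le (by positivity)
  have hfl2 := Nat.lt_floor_add_one (y/6)
  have hk1 : 1 ≤ ⌊y/6⌋₊ := Nat.le_floor (by push_cast; linarith)
  have hk1' : (1:ℝ) ≤ ⌊y/6⌋₊ := by exact_mod_cast hk1
  refine ⟨⌊y/6⌋₊, hk1, ?_, ?_⟩
  · have : ((5 * (⌊y/6⌋₊:ℝ) + 1))^m ≤ y^m := by
      gcongr
      linarith
    rw [hym] at this
    have : 4 * (5 * (⌊y/6⌋₊:ℝ) + 1)^m ≤ d := by linarith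
    exact_mod_cast this
  · have h1 : (d:ℝ)^((1:ℝ)/m) ≤ 4 * y := by
      have e : (d:ℝ) = 4 * ((d:ℝ)/4) := by ring
      conv_lhs => rw [e]
      rw [Real.mul_rpow (by norm_num) (by positivity)]
      gcongr
      calc (4:ℝ)^((1:ℝ)/m) ≤ 4^(1:ℝ) := by
            apply Real.rpow_le_rpow_of_exponent_le (by norm_num)
            rw [div_le_one (by positivity)]
            exact_mod_cast hm
        _ = 4 := by simp
    linarith

theorem statement9 (r : ℕ) (hr : 1 ≤ r) :
    ∃ (c : ℝ) (d₀ : ℕ), 0 < c ∧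
      ∀ d : ℕ, d₀ ≤ d →
        ∀ (V : Type) [Fintype V] (G : SimpleGraph V), RegularDeg G d →
          ∃ H : SimpleGraph V, H ≤ G ∧
            (∀ j : ℕ, 3 ≤ j → j ≤ 2 * r + 1 → ¬ ContainsCopy (cycleGraph j) H) ∧
            ∀ v : V, c * (d : ℝ) ^ ((1 : ℝ) / (2 * (r : ℝ) - 1)) ≤ (deg H v : ℝ) := by
  refine ⟨1/48, 4 * 6^(2*r-1), by norm_num, ?_⟩
  intro d hd V _ G hG
  obtain ⟨k, hk1, hk2, hk3⟩ := choose_k (2*r-1) d (by omega) hd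
  have ecast : ((2*r-1 : ℕ) : ℝ) = 2 * (r:ℝ) - 1 := by
    rw [Nat.cast_sub (by omega)]; push_cast; ring
  rw [ecast] at hk3
  obtain ⟨χ, hχ⟩ := maxcut G
  let G' : SimpleGraph V :=
    { Adj := fun u v => G.Adj u v ∧ χ u ≠ χ v
      symm := ⟨fun u v h => ⟨h.1.symm, h.2.symm⟩⟩
      loopless := ⟨fun u h => h.2 rfl⟩ }
  have hG' : ∀ v, NN G' v = (NN G v).filter (fun u => χ v ≠ χ u) := by
    intro v; ext u; simp [mem_NN, G']
  have hGd : ∀ v, (NN G v).card = d := fun v => by rw [← deg_eq_NN]; exact hG v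
  obtain ⟨H, hle, hc, hdeg⟩ := core_s9 G' χ (fun u v h => h.2) r k d hr hk1
    (fun v => by rw [hG', ← hGd v]; exact Finset.card_filter_le _ _)
    (fun v => by rw [hG', ← hGd v]; exact hχ v) hk2
  refine ⟨H, fun u v h => (hle h).1, hc.noCopy, fun v => hk3.trans ?_⟩
  rw [deg_eq_NN]
  exact_mod_cast hdeg v
end
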